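/- arXiv:math/0410052 — 2 statements merged into one kernel-verified Lean document; each statement's English description precedes it below -/
import Mathlib

section
/- Let S be a Polish space, c : S × S → [0,∞) a cost function satisfying condition (★), (Ω, 𝒜, P) a probability space, and ω ↦ μ_ω, ω ↦ ν_ω two measurable maps from Ω to the space P(S) of Borel probability measures on S (with the topology of weak convergence) such that ∫_Ω ∫_S c(x, x₀) dμ_ω(x) dP(ω) < ∞ and ∫_Ω ∫_S c(x, x₀) dν_ω(x) dP(ω) < ∞ for some x₀ ∈ S. Let G(ω) := KR_c(μ_ω, ν_ω). Then G(ω) = ℓ_c(μ_ω, ν_ω) for every ω, and there exists a map ω ↦ λ_ω from Ω to P(S × S), measurable with respect to the universal completion 𝒜* of 𝒜, such that for every ω ∈ Ω the measure λ_ω has margins μ_ω and ν_ω and G(ω) = ∫_{S×S} c(x,y) dλ_ω(x,y). -/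
open MeasureTheory ProbabilityTheory ENNReal Set

noncomputable section

/-- The `μ`-completion of the σ-algebra `m`. -/
def muCompletion {α : Type*} (m : MeasurableSpace α) (μ : @Measure α m) : MeasurableSpace α :=
  letI := m
  inferInstanceAs (MeasurableSpace (MeasureTheory.NullMeasurableSpace α μ))

/-- The universal completion of a σ-algebra: the intersection of the `μ`-completions
over all finite nonnegative measures `μ`. -/
def univCompletion {α : Type*} (m : MeasurableSpace α) : MeasurableSpace α :=
  ⨅ (μ : @Measure α m) (_ : @IsFiniteMeasure α m μ), muCompletion m μ

/-- `Lip_c`: bounded continuous functions `u : S → ℝ` with `|u x - u y| ≤ c x y`. -/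
def LipC {S : Type*} [TopologicalSpace S] (c : S → S → ℝ) : Set (S → ℝ) :=
  {u | Continuous u ∧ (∃ M, ∀ x, |u x| ≤ M) ∧ ∀ x y, |u x - u y| ≤ c x y}

/-- Condition (★): `c x y = sup_{u ∈ Lip_c} |u x - u y|` for all `x, y`. -/
def StarCond {S : Type*} [TopologicalSpace S] (c : S → S → ℝ) : Prop :=
  ∀ x y, c x y = sSup {r : ℝ | ∃ u ∈ LipC c, r = |u x - u y|}

/-- `D(μ,ν)`: couplings of `μ` and `ν`, i.e. probability measures on `S × S`
with first margin `μ` and second margin `ν`. -/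
def Couplings {S : Type*} [MeasurableSpace S] (μ ν : Measure S) : Set (Measure (S × S)) :=
  {π | IsProbabilityMeasure π ∧ π.map Prod.fst = μ ∧ π.map Prod.snd = ν}

/-- The Kantorovich–Rubinštein functional `KR_c(μ,ν)`. -/
def KR {S : Type*} [MeasurableSpace S] (c : S → S → ℝ) (μ ν : Measure S) : ℝ≥0∞ :=
  ⨅ π ∈ Couplings μ ν, ∫⁻ p, ENNReal.ofReal (c p.1 p.2) ∂π

/-- The dual functional `ℓ_c(μ,ν) = sup_{f ∈ Lip_c} |∫ f dμ - ∫ f dν|`. -/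
def lipDist {S : Type*} [TopologicalSpace S] [MeasurableSpace S] (c : S → S → ℝ)
    (μ ν : Measure S) : ℝ≥0∞ :=
  ⨆ u ∈ LipC c, ENNReal.ofReal |∫ x, u x ∂μ - ∫ x, u x ∂ν|

section Helpers
open Filter Topology

def argStep {Ω X : Type*} (K : Ω → Set X) (g : X → ℝ≥0∞) (ω : Ω) : Set X :=
  {x | x ∈ K ω ∧ ∀ y ∈ K ω, g x ≤ g y}

lemma argStep_compact {Ω X : Type*} [TopologicalSpace X] {K : Ω → Set X}
    (hc : ∀ ω, IsCompact (K ω)) {g : X → ℝ≥0∞} (hg : LowerSemicontinuous g) (ω : Ω) :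
    IsCompact (argStep K g ω) := by
  have : argStep K g ω = K ω ∩ ⋂ y ∈ K ω, {x | g x ≤ g y} := by
    ext x; simp [argStep]
  rw [this]
  refine (hc ω).inter_right (isClosed_biInter fun y _ => ?_)
  exact hg.isClosed_preimage (g y)

lemma argStep_nonempty {Ω X : Type*} [TopologicalSpace X] {K : Ω → Set X}
    (hc : ∀ ω, IsCompact (K ω)) (hn : ∀ ω, (K ω).Nonempty)
    {g : X → ℝ≥0∞} (hg : LowerSemicontinuous g) (ω : Ω) :
    (argStep K g ω).Nonempty := by
  obtain ⟨x, hx, hmin⟩ := (hg.lowerSemicontinuousOn (K ω)).exists_isMinOn (hn ω) (hc ω)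
  exact ⟨x, hx, fun y hy => hmin hy⟩

lemma argStep_meas {Ω X : Type*} [MeasurableSpace Ω] [TopologicalSpace X] {K : Ω → Set X}
    (hc : ∀ ω, IsCompact (K ω))
    (hm : ∀ C, IsClosed C → MeasurableSet {ω | (K ω ∩ C).Nonempty})
    {g : X → ℝ≥0∞} (hg : LowerSemicontinuous g) (C : Set X) (hC : IsClosed C) :
    MeasurableSet {ω | (argStep K g ω ∩ C).Nonempty} := by
  have key : {ω | (argStep K g ω ∩ C).Nonempty} =
      {ω | (K ω ∩ C).Nonempty} ∩ ⋂ q : ℚ,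
        ({ω | (K ω ∩ {x | g x ≤ ENNReal.ofReal q}).Nonempty}ᶜ ∪
          {ω | (K ω ∩ (C ∩ {x | g x ≤ ENNReal.ofReal q})).Nonempty}) := by
    ext ω
    simp only [mem_inter_iff, mem_iInter, mem_union, mem_compl_iff, mem_ofPred_eq]
    constructor
    · rintro ⟨x, ⟨hx, hmin⟩, hxC⟩
      refine ⟨⟨x, hx, hxC⟩, fun q => ?_⟩
      by_cases h : (K ω ∩ {x | g x ≤ ENNReal.ofReal q}).Nonempty
      · obtain ⟨y, hy, hyq⟩ := h
        exact Or.inr ⟨x, hx, hxC, (hmin y hy).trans hyq⟩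
      · exact Or.inl h
    · rintro ⟨hne, hq⟩
      obtain ⟨x, ⟨hx, hxC⟩, hmin⟩ :=
        (hg.lowerSemicontinuousOn (K ω ∩ C)).exists_isMinOn hne ((hc ω).inter_right hC)
      refine ⟨x, ⟨hx, fun y hy => ?_⟩, hxC⟩
      by_contra hlt
      push Not at hlt
      obtain ⟨q, -, h1, h2⟩ := ENNReal.lt_iff_exists_rat_btwn.1 hlt
      rcases hq q with h | h
      · exact h ⟨y, hy, h1.le⟩
      · obtain ⟨z, hz, hzC, hzq⟩ := h
        exact absurd (hmin ⟨hz, hzC⟩) (not_le.2 (lt_of_le_of_lt hzq h2))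
  rw [key]
  refine (hm C hC).inter (MeasurableSet.iInter fun q => ?_)
  have hcl : IsClosed {x | g x ≤ ENNReal.ofReal q} := hg.isClosed_preimage _
  exact (hm _ hcl).compl.union (hm _ (hC.inter hcl))

def argIter {Ω X : Type*} (K : Ω → Set X) (g : ℕ → X → ℝ≥0∞) : ℕ → Ω → Set X
  | 0 => K
  | n + 1 => argStep (argIter K g n) (g n)

theorem exists_lex_selection {Ω X : Type*} [MeasurableSpace Ω] [TopologicalSpace X] [T2Space X]
    (K : Ω → Set X) (hc : ∀ ω, IsCompact (K ω)) (hn : ∀ ω, (K ω).Nonempty)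
    (hm : ∀ C, IsClosed C → MeasurableSet {ω | (K ω ∩ C).Nonempty})
    (g : ℕ → X → ℝ≥0∞) (hg : ∀ n, LowerSemicontinuous (g n))
    (hsep : ∀ x y, (∀ n, g n x = g n y) → x = y) :
    ∃ s : Ω → X, @Measurable Ω X _ (borel X) s ∧
      ∀ ω, s ω ∈ K ω ∧ ∀ y ∈ K ω, g 0 (s ω) ≤ g 0 y := by
  have H : ∀ n, (∀ ω, IsCompact (argIter K g n ω)) ∧ (∀ ω, (argIter K g n ω).Nonempty) ∧
      (∀ C, IsClosed C → MeasurableSet {ω | (argIter K g n ω ∩ C).Nonempty}) := by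
    intro n
    induction n with
    | zero => exact ⟨hc, hn, hm⟩
    | succ n ih =>
      exact ⟨argStep_compact ih.1 (hg n), argStep_nonempty ih.1 ih.2.1 (hg n),
        argStep_meas ih.1 ih.2.2 (hg n)⟩
  have hdec : ∀ n ω, argIter K g (n+1) ω ⊆ argIter K g n ω := fun n ω x hx => hx.1
  have hne : ∀ ω, (⋂ n, argIter K g n ω).Nonempty := fun ω =>
    IsCompact.nonempty_iInter_of_sequence_nonempty_isCompact_isClosed _ (fun n => hdec n ω)
      (fun n => (H n).2.1 ω) ((H 0).1 ω) (fun n => ((H n).1 ω).isClosed)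
  choose s hs using hne
  have hs' : ∀ ω n, s ω ∈ argIter K g n ω := fun ω n => mem_iInter.1 (hs ω) n
  have huniq : ∀ ω x, (∀ n, x ∈ argIter K g n ω) → x = s ω := fun ω x hx =>
    hsep _ _ fun n => le_antisymm ((hx (n+1)).2 _ (hs' ω n)) ((hs' ω (n+1)).2 _ (hx n))
  refine ⟨s, ?_, fun ω => ⟨hs' ω 0, (hs' ω 1).2⟩⟩
  let _ : MeasurableSpace X := borel X
  have _ : BorelSpace X := ⟨rfl⟩
  refine measurable_of_isClosed fun C hC => ?_
  have : s ⁻¹' C = ⋂ n, {ω | (argIter K g n ω ∩ C).Nonempty} := by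
    ext ω
    simp only [mem_preimage, mem_iInter, mem_ofPred_eq]
    constructor
    · exact fun h n => ⟨s ω, hs' ω n, h⟩
    · intro h
      have : (⋂ n, argIter K g n ω ∩ C).Nonempty :=
        IsCompact.nonempty_iInter_of_sequence_nonempty_isCompact_isClosed _
          (fun n => inter_subset_inter_left _ (hdec n ω)) h (((H 0).1 ω).inter_right hC)
          (fun n => ((H n).1 ω).isClosed.inter hC)
      obtain ⟨x, hx⟩ := this
      have hx' := mem_iInter.1 hx
      rw [← huniq ω x (fun n => (hx' n).1)]
      exact (hx' 0).2
  rw [this]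
  exact MeasurableSet.iInter fun n => (H n).2.2 C hC

lemma meas_pair_closed {Ω Y Z : Type*} [MeasurableSpace Ω] [TopologicalSpace Y]
    [TopologicalSpace Z] [SecondCountableTopology Y] [SecondCountableTopology Z]
    {f : Ω → Y} {g : Ω → Z} (hf : @Measurable Ω Y _ (borel Y) f)
    (hg : @Measurable Ω Z _ (borel Z) g) {T : Set (Y × Z)} (hT : IsClosed T) :
    MeasurableSet {ω | (f ω, g ω) ∈ T} := by
  let _ : MeasurableSpace Y := borel Y
  have _ : BorelSpace Y := ⟨rfl⟩
  let _ : MeasurableSpace Z := borel Z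
  have _ : BorelSpace Z := ⟨rfl⟩
  exact (hf.prodMk hg) hT.measurableSet

lemma lsc_measure_open {S : Type*} [TopologicalSpace S] [MeasurableSpace S]
    [OpensMeasurableSpace S] [HasOuterApproxClosed S] {G : Set S} (hG : IsOpen G) :
    LowerSemicontinuous fun μ : ProbabilityMeasure S => (μ : Measure S) G := by
  rw [lowerSemicontinuous_iff_le_liminf]
  exact fun μ => ProbabilityMeasure.le_liminf_measure_open_of_tendsto tendsto_id hG

section Polish
variable {S : Type*} [TopologicalSpace S] [PolishSpace S] [MeasurableSpace S] [BorelSpace S]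

/-- a countable family of open sets, closed under finite unions, containing a basis -/
lemma exists_good_opens (S : Type*) [TopologicalSpace S] [SecondCountableTopology S] :
    ∃ B : Set (Set S), B.Countable ∧ (∀ U ∈ B, IsOpen U) ∧
      ∀ G, IsOpen G → ∃ U : ℕ → Set S, (∀ n, U n ∈ B) ∧ Monotone U ∧ ⋃ n, U n = G := by
  classical
  let b := TopologicalSpace.countableBasis S
  have hb : b.Countable := TopologicalSpace.countable_countableBasis S
  refine ⟨sUnion '' {F : Set (Set S) | F.Finite ∧ F ⊆ b}, ?_, ?_, ?_⟩
  · exact (countable_ofPred_finite_subset hb).image _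
  · rintro _ ⟨F, ⟨-, hF⟩, rfl⟩
    exact isOpen_sUnion fun U hU => TopologicalSpace.isOpen_of_mem_countableBasis (hF hU)
  · intro G hG
    let A : Set (Set S) := {U ∈ b | U ⊆ G}
    have hA : A.Countable := hb.mono (sep_subset _ _)
    have hAG : ⋃₀ A = G := by
      rw [(TopologicalSpace.isBasis_countableBasis S).open_eq_sUnion' hG]
    rcases A.eq_empty_or_nonempty with hAe | hAn
    · refine ⟨fun _ => ∅, fun _ => ⟨∅, by simp, by simp⟩, fun _ _ _ => le_rfl, ?_⟩
      rw [← hAG, hAe]; simp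
    · obtain ⟨e, he⟩ := hA.exists_eq_range hAn
      refine ⟨fun n => ⋃₀ (e '' Iic n), fun n => ⟨_, ⟨(finite_Iic n).image _, ?_⟩, rfl⟩, ?_, ?_⟩
      · rintro _ ⟨k, -, rfl⟩
        have : e k ∈ A := he ▸ mem_range_self k
        exact this.1
      · intro m n hmn
        exact sUnion_subset_sUnion (image_mono (Iic_subset_Iic.2 hmn))
      · rw [← hAG, he]
        ext x
        simp only [mem_iUnion, mem_sUnion, mem_image, mem_Iic, mem_range]
        constructor
        · rintro ⟨n, _, ⟨k, -, rfl⟩, hx⟩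
          exact ⟨_, ⟨k, rfl⟩, hx⟩
        · rintro ⟨_, ⟨k, rfl⟩, hx⟩
          exact ⟨k, _, ⟨k, le_rfl, rfl⟩, hx⟩

lemma exists_lt_of_good {S : Type*} [MeasurableSpace S] {μ : Measure S} {U : ℕ → Set S}
    (hU : Monotone U) {r : ℝ≥0∞} (h : r < μ (⋃ n, U n)) : ∃ n, r < μ (U n) := by
  rw [hU.measure_iUnion] at h
  exact lt_iSup_iff.1 h

instance secondCountable_probabilityMeasure :
    SecondCountableTopology (ProbabilityMeasure S) := by
  obtain ⟨B, hBc, hBo, hB⟩ := exists_good_opens S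
  let gen : Set (Set (ProbabilityMeasure S)) :=
    (fun p : Set S × ℚ => {μ : ProbabilityMeasure S | ENNReal.ofReal p.2 < (μ : Measure S) p.1}) ''
      (B ×ˢ univ)
  have hgen : gen.Countable := (hBc.prod (countable_univ)).image _
  have h2 : @SecondCountableTopology _ (TopologicalSpace.generateFrom gen) :=
    @SecondCountableTopology.mk _ (TopologicalSpace.generateFrom gen) ⟨gen, hgen, rfl⟩
  refine ⟨⟨gen, hgen, le_antisymm ?_ ?_⟩⟩
  · refine le_generateFrom ?_
    rintro _ ⟨⟨U, q⟩, ⟨hU, -⟩, rfl⟩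
    exact (lsc_measure_open (hBo U hU)).isOpen_preimage _
  · refine le_of_nhds_le_nhds fun μ => ?_
    have : (@nhds _ (TopologicalSpace.generateFrom gen) μ).IsCountablyGenerated :=
      (@TopologicalSpace.SecondCountableTopology.to_firstCountableTopology _ (TopologicalSpace.generateFrom gen) h2).nhds_generated_countable μ
    refine tendsto_of_forall_isOpen_le_liminf' (μs := id) (L := @nhds _ (TopologicalSpace.generateFrom gen) μ) fun G hG => ?_
    refine le_of_forall_lt fun r hr => ?_
    obtain ⟨r', hr', hr''⟩ := exists_between hr
    refine hr'.trans_le (le_liminf_of_le (by isBoundedDefault) ?_)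
    obtain ⟨U, hUB, hUm, rfl⟩ := hB G hG
    obtain ⟨n, hn⟩ := exists_lt_of_good hUm hr''
    obtain ⟨q, -, h1, h2⟩ := ENNReal.lt_iff_exists_rat_btwn.1 hn
    have hop : @IsOpen _ (TopologicalSpace.generateFrom gen) {μ : ProbabilityMeasure S | ENNReal.ofReal q < (μ : Measure S) (U n)} :=
      TopologicalSpace.isOpen_generateFrom_of_mem ⟨(U n, q), ⟨hUB n, mem_univ _⟩, rfl⟩
    filter_upwards [(@IsOpen.mem_nhds _ (TopologicalSpace.generateFrom gen) _ _ hop h2)] with ν hν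
    exact (h1.trans hν).le.trans (measure_mono (subset_iUnion U n))

def margins (π : ProbabilityMeasure (S × S)) : ProbabilityMeasure S × ProbabilityMeasure S :=
  (π.map measurable_fst.aemeasurable, π.map measurable_snd.aemeasurable)

lemma continuous_margins : Continuous (margins (S := S)) :=
  (ProbabilityMeasure.continuous_map continuous_fst).prodMk
    (ProbabilityMeasure.continuous_map continuous_snd)

lemma tight_of_compact {A : Set (ProbabilityMeasure S)} (hA : IsCompact A) :
    IsTightMeasureSet {((μ : ProbabilityMeasure S) : Measure S) | μ ∈ A} := by
  let _ := TopologicalSpace.upgradeIsCompletelyMetrizable S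
  exact isTightMeasureSet_of_isCompact_closure (by rwa [hA.isClosed.closure_eq])

lemma isProperMap_margins : IsProperMap (margins (S := S)) := by
  rw [isProperMap_iff_isCompact_preimage]
  refine ⟨continuous_margins, fun K hK => ?_⟩
  have hcl : IsClosed (margins ⁻¹' K) := hK.isClosed.preimage continuous_margins
  rw [← hcl.closure_eq]
  refine isCompact_closure_of_isTightMeasureSet (IsTightMeasureSet.prodMk ?_ ?_)
  · refine (tight_of_compact (hK.image continuous_fst)).subset ?_
    rintro _ ⟨_, ⟨π, hπ, rfl⟩, rfl⟩
    exact ⟨_, ⟨_, hπ, rfl⟩, rfl⟩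
  · refine (tight_of_compact (hK.image continuous_snd)).subset ?_
    rintro _ ⟨_, ⟨π, hπ, rfl⟩, rfl⟩
    exact ⟨_, ⟨_, hπ, rfl⟩, rfl⟩

theorem exists_opt_selection {Ω : Type*} [MeasurableSpace Ω] (μ ν : Ω → ProbabilityMeasure S)
    (hμ : @Measurable Ω (ProbabilityMeasure S) _ (borel (ProbabilityMeasure S)) μ)
    (hν : @Measurable Ω (ProbabilityMeasure S) _ (borel (ProbabilityMeasure S)) ν)
    (g : ProbabilityMeasure (S × S) → ℝ≥0∞) (hg : LowerSemicontinuous g) :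
    ∃ lam : Ω → ProbabilityMeasure (S × S),
      @Measurable Ω _ _ (borel (ProbabilityMeasure (S × S))) lam ∧
      ∀ ω, margins (lam ω) = (μ ω, ν ω) ∧
        ∀ π, margins π = (μ ω, ν ω) → g (lam ω) ≤ g π := by
  obtain ⟨B, hBc, hBo, hB⟩ := exists_good_opens (S × S)
  have hBn : B.Nonempty := by
    obtain ⟨U, hU, -⟩ := hB univ isOpen_univ
    exact ⟨_, hU 0⟩
  obtain ⟨e, he⟩ := hBc.exists_eq_range hBn
  let G : ℕ → ProbabilityMeasure (S × S) → ℝ≥0∞ := fun n => match n with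
    | 0 => g
    | n + 1 => fun π => (π : Measure (S × S)) (e n)
  have hG : ∀ n, LowerSemicontinuous (G n) := by
    intro n
    cases n with
    | zero => exact hg
    | succ n => exact lsc_measure_open (hBo _ (he ▸ mem_range_self n))
  have hsep : ∀ x y, (∀ n, G n x = G n y) → x = y := by
    intro x y hxy
    have hopen : ∀ O, IsOpen O → (x : Measure (S × S)) O = (y : Measure (S × S)) O := by
      intro O hO
      obtain ⟨U, hUB, hUm, rfl⟩ := hB O hO
      rw [hUm.measure_iUnion, hUm.measure_iUnion]
      congr 1; ext n
      obtain ⟨k, hk⟩ := he ▸ hUB n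
      rw [← hk]
      exact hxy (k+1)
    apply ProbabilityMeasure.toMeasure_injective
    refine MeasureTheory.ext_of_generate_finite {O | IsOpen O} ?_ isPiSystem_isOpen
      (fun O hO => hopen O hO) (hopen univ isOpen_univ)
    exact BorelSpace.measurable_eq
  obtain ⟨s, hs, hs'⟩ := exists_lex_selection (fun ω => margins ⁻¹' {(μ ω, ν ω)})
    (fun ω => isProperMap_margins.isCompact_preimage isCompact_singleton)
    (fun ω => ⟨⟨(μ ω : Measure S).prod (ν ω : Measure S), inferInstance⟩, by
      apply Prod.ext
      · apply ProbabilityMeasure.toMeasure_injective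
        exact (Measure.fst_prod (μ := (μ ω : Measure S)) (ν := (ν ω : Measure S)))
      · apply ProbabilityMeasure.toMeasure_injective
        exact (Measure.snd_prod (μ := (μ ω : Measure S)) (ν := (ν ω : Measure S)))⟩)
    (fun C hC => by
      have := meas_pair_closed hμ hν (isProperMap_margins.isClosedMap C hC)
      convert! this using 1
      ext ω
      simp only [Set.Nonempty, mem_inter_iff, mem_preimage, mem_singleton_iff, mem_image,
        mem_ofPred_eq]
      exact ⟨fun ⟨x, h1, h2⟩ => ⟨x, h2, h1⟩, fun ⟨x, h1, h2⟩ => ⟨x, h2, h1⟩⟩)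
    G hG hsep
  exact ⟨s, hs, hs'⟩

end Polish


/-- Finite Kantorovich-Rubinstein duality. -/
theorem finite_duality {I : Type*} [Fintype I] [Nonempty I] (d : I → I → ℝ)
    (d0 : ∀ i, d i i = 0) (dsymm : ∀ i j, d i j = d j i)
    (dtri : ∀ i j k, d i k ≤ d i j + d j k)
    (p r : I → ℝ) (hp : ∀ i, 0 ≤ p i) (hr : ∀ i, 0 ≤ r i) (hp1 : ∑ i, p i = 1)
    (hr1 : ∑ i, r i = 1) (L : ℝ)
    (hL : ∀ f : I → ℝ, (∀ i j, |f i - f j| ≤ d i j) → ∑ i, f i * p i - ∑ i, f i * r i ≤ L) :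
    ∃ π : I → I → ℝ, (∀ i j, 0 ≤ π i j) ∧ (∀ i, ∑ j, π i j = p i) ∧ (∀ j, ∑ i, π i j = r j) ∧
      ∑ i, ∑ j, π i j * d i j ≤ L := by
  classical
  let A : (I × I → ℝ) → Set ℝ := fun h =>
    {v | ∃ φ ψ : I → ℝ, (∀ i j, h (i, j) ≤ φ i + ψ j) ∧ v = ∑ i, φ i * p i + ∑ j, ψ j * r j}
  let N : (I × I → ℝ) → ℝ := fun h => sInf (A h)
  have hprod : ∀ φ ψ : I → ℝ, ∑ i, φ i * p i + ∑ j, ψ j * r j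
      = ∑ i, ∑ j, (φ i + ψ j) * (p i * r j) := by
    intro φ ψ
    have h1 : ∀ i, ∑ j, (φ i + ψ j) * (p i * r j) = φ i * p i + p i * ∑ j, ψ j * r j := by
      intro i
      have : ∀ j, (φ i + ψ j) * (p i * r j) = (φ i * p i) * r j + p i * (ψ j * r j) := by
        intro j; ring
      simp_rw [this, Finset.sum_add_distrib, ← Finset.mul_sum, hr1, mul_one]
    simp_rw [h1, Finset.sum_add_distrib, ← Finset.sum_mul, hp1, one_mul]
  have hlow : ∀ h, ∀ v ∈ A h, ∑ i, ∑ j, h (i, j) * (p i * r j) ≤ v := by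
    rintro h _ ⟨φ, ψ, hh, rfl⟩
    rw [hprod]
    exact Finset.sum_le_sum fun i _ => Finset.sum_le_sum fun j _ =>
      mul_le_mul_of_nonneg_right (hh i j) (mul_nonneg (hp i) (hr j))
  have hbdd : ∀ h, BddBelow (A h) := fun h => ⟨_, fun v hv => hlow h v hv⟩
  have hne : ∀ h, (A h).Nonempty := by
    intro h
    obtain ⟨M, hM⟩ := (Set.finite_range h).bddAbove
    exact ⟨_, fun _ => M, fun _ => 0, fun i j => by
      simpa using hM (mem_range_self (i, j)), rfl⟩
  have hNle : ∀ (h : I × I → ℝ) (φ ψ : I → ℝ), (∀ i j, h (i, j) ≤ φ i + ψ j) →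
      N h ≤ ∑ i, φ i * p i + ∑ j, ψ j * r j := fun h φ ψ hh =>
    csInf_le (hbdd h) ⟨φ, ψ, hh, rfl⟩
  have hhom' : ∀ c : ℝ, 0 < c → ∀ x, N (c • x) ≤ c * N x := by
    intro c hc x
    have : N (c • x) / c ≤ N x := by
      refine le_csInf (hne x) ?_
      rintro _ ⟨φ, ψ, hh, rfl⟩
      rw [div_le_iff₀ hc]
      refine (hNle (c • x) (fun i => c * φ i) (fun j => c * ψ j) fun i j => ?_).trans (le_of_eq ?_)
      · have := mul_le_mul_of_nonneg_left (hh i j) hc.le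
        simp only [Pi.smul_apply, smul_eq_mul]; linarith
      · simp_rw [mul_assoc, ← Finset.mul_sum]; ring
    rw [div_le_iff₀ hc] at this
    linarith
  have hhom : ∀ c : ℝ, 0 < c → ∀ x, N (c • x) = c * N x := by
    intro c hc x
    refine le_antisymm (hhom' c hc x) ?_
    have := hhom' c⁻¹ (inv_pos.2 hc) (c • x)
    rw [inv_smul_smul₀ hc.ne'] at this
    calc c * N x ≤ c * (c⁻¹ * N (c • x)) := mul_le_mul_of_nonneg_left this hc.le
      _ = N (c • x) := by field_simp
  have hadd : ∀ x y, N (x + y) ≤ N x + N y := by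
    intro x y
    rw [← sub_le_iff_le_add]
    refine le_csInf (hne x) ?_
    rintro _ ⟨φ, ψ, hh, rfl⟩
    rw [sub_le_iff_le_add', ← sub_le_iff_le_add]
    refine le_csInf (hne y) ?_
    rintro _ ⟨φ', ψ', hh', rfl⟩
    have := hNle (x + y) (fun i => φ i + φ' i) (fun j => ψ j + ψ' j) fun i j => by
      have := hh i j
      have := hh' i j
      simp only [Pi.add_apply]; linarith
    simp_rw [add_mul, Finset.sum_add_distrib] at this
    linarith
  have hN0 : N 0 = 0 := by
    have := hhom 2 (by norm_num) 0
    rw [smul_zero] at this; linarith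
  let D : I × I → ℝ := fun q => - d q.1 q.2
  have hD : -L ≤ N D := by
    refine le_csInf (hne D) ?_
    rintro _ ⟨φ, ψ, hh, rfl⟩
    let f : I → ℝ := fun x => Finset.univ.inf' Finset.univ_nonempty fun i => d x i + φ i
    have hf1 : ∀ x, f x ≤ φ x := fun x => by
      have := Finset.inf'_le (fun i => d x i + φ i) (Finset.mem_univ x)
      simpa [d0] using this
    have hf2 : ∀ x, - f x ≤ ψ x := fun x => by
      rw [neg_le]
      refine Finset.le_inf' _ _ fun i _ => ?_
      have := hh i x
      have := dsymm i x
      simp only [D] at *; linarith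
    have hf3 : ∀ x y, f x ≤ f y + d x y := fun x y => by
      rw [← sub_le_iff_le_add]
      refine Finset.le_inf' _ _ fun i _ => ?_
      have := Finset.inf'_le (fun i => d x i + φ i) (Finset.mem_univ i)
      have := dtri x y i
      simp only [f] at *; linarith
    have h := hL (fun i => - f i) fun i j => by
      rw [abs_le]
      have := hf3 i j
      have := hf3 j i
      have := dsymm i j
      constructor <;> linarith
    have h1 : ∑ i, f i * p i ≤ ∑ i, φ i * p i := Finset.sum_le_sum fun i _ =>
      mul_le_mul_of_nonneg_right (hf1 i) (hp i)
    have h2 : ∑ i, (-f i) * r i ≤ ∑ i, ψ i * r i := Finset.sum_le_sum fun i _ =>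
      mul_le_mul_of_nonneg_right (hf2 i) (hr i)
    simp_rw [neg_mul, Finset.sum_neg_distrib] at h h2
    linarith
  have hex : ∃ g : (I × I → ℝ) →ₗ[ℝ] ℝ, g D = N D ∧ ∀ x, g x ≤ N x := by
    have hwd : ∀ c : ℝ, c • D = 0 → (RingHom.id ℝ c) • N D = 0 := by
      intro c hc
      rcases smul_eq_zero.1 hc with h | h
      · simp [h]
      · simp [h, hN0]
    obtain ⟨g, hg1, hg2⟩ := exists_extension_of_le_sublinear
      (LinearPMap.mkSpanSingleton' D (N D) hwd) N hhom hadd (by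
        rintro ⟨x, hx⟩
        obtain ⟨c, rfl⟩ := Submodule.mem_span_singleton.1 hx
        rw [LinearPMap.mkSpanSingleton'_apply]
        simp only [RingHom.id_apply, smul_eq_mul]
        rcases lt_trichotomy c 0 with hc | rfl | hc
        · have h1 := hhom (-c) (by linarith) D
          have h2 := hadd (c • D) ((-c) • D)
          rw [← add_smul, add_neg_cancel, zero_smul, hN0, h1] at h2
          linarith
        · simp [hN0]
        · rw [hhom c hc])
    refine ⟨g, ?_, hg2⟩
    exact (hg1 ⟨D, Submodule.mem_span_singleton_self D⟩).trans
      (LinearPMap.mkSpanSingleton'_apply_self D (N D) hwd _)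
  obtain ⟨g, hgD, hgN⟩ := hex
  let π : I → I → ℝ := fun i j => g (Pi.single (i, j) 1)
  have hg : ∀ h, g h = ∑ i, ∑ j, π i j * h (i, j) := by
    intro h
    conv_lhs => rw [← Finset.univ_sum_single h]
    rw [map_sum, Fintype.sum_prod_type]
    refine Finset.sum_congr rfl fun i _ => Finset.sum_congr rfl fun j _ => ?_
    have : (Pi.single (i, j) (h (i, j)) : I × I → ℝ) = h (i, j) • Pi.single (i, j) (1:ℝ) := by
      rw [← Pi.single_smul, smul_eq_mul, mul_one]
    rw [this, map_smul, smul_eq_mul, mul_comm]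
  have hgle : ∀ φ ψ : I → ℝ, g (fun q => φ q.1 + ψ q.2) ≤ ∑ i, φ i * p i + ∑ j, ψ j * r j :=
    fun φ ψ => (hgN _).trans (hNle (fun q => φ q.1 + ψ q.2) φ ψ fun i j => le_rfl)
  have hgeq : ∀ φ ψ : I → ℝ, g (fun q => φ q.1 + ψ q.2) = ∑ i, φ i * p i + ∑ j, ψ j * r j := by
    intro φ ψ
    refine le_antisymm (hgle φ ψ) ?_
    have := hgle (fun i => - φ i) (fun j => - ψ j)
    have h2 : (fun q : I × I => -φ q.1 + -ψ q.2) = -(fun q : I × I => φ q.1 + ψ q.2) := by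
      ext q; simp; ring
    rw [h2, map_neg] at this
    simp_rw [neg_mul, Finset.sum_neg_distrib] at this
    linarith
  refine ⟨π, fun i j => ?_, fun i => ?_, fun j => ?_, ?_⟩
  · have h1 := hgN (-Pi.single (i, j) 1)
    have h2 := hNle (-Pi.single (i, j) 1) 0 0 fun i' j' => by
      simp only [Pi.neg_apply, Pi.zero_apply, add_zero, Left.neg_nonpos_iff]
      rw [Pi.single_apply]; split_ifs <;> norm_num
    rw [map_neg] at h1
    simp at h2
    simp only [π]; linarith
  · have := hgeq (Pi.single i 1) 0
    rw [hg] at this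
    simpa [Pi.single_apply] using this
  · have := hgeq 0 (Pi.single j 1)
    rw [hg] at this
    simpa [Pi.single_apply] using this
  · have := hg D
    simp only [D, mul_neg, Finset.sum_neg_distrib] at this
    have h2 : g D = g (fun q => - d q.1 q.2) := rfl
    rw [← h2, hgD] at this
    linarith

lemma sum_restrict_partition {S I : Type*} [MeasurableSpace S] [Fintype I] (A : I → Set S)
    (hA : ∀ i, MeasurableSet (A i)) (hdisj : Pairwise (Function.onFun Disjoint A))
    (hun : ⋃ i, A i = univ) (μ : Measure S) : ∑ i, μ.restrict (A i) = μ := by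
  rw [← Measure.sum_fintype, ← Measure.restrict_iUnion hdisj hA, hun, Measure.restrict_univ]

theorem glue_partition {S I : Type*} [MeasurableSpace S] [Fintype I] (A : I → Set S)
    (hA : ∀ i, MeasurableSet (A i)) (hdisj : Pairwise (Function.onFun Disjoint A))
    (hun : ⋃ i, A i = univ) (μ ν : Measure S) [IsProbabilityMeasure μ] [IsProbabilityMeasure ν]
    (π : I → I → ℝ) (hπ : ∀ i j, 0 ≤ π i j) (h1 : ∀ i, ∑ j, π i j = μ.real (A i))
    (h2 : ∀ j, ∑ i, π i j = ν.real (A j)) :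
    ∃ lam : Measure (S × S), lam.map Prod.fst = μ ∧ lam.map Prod.snd = ν ∧
      ∀ (c : S × S → ℝ≥0∞) (K : I → I → ℝ≥0∞),
        (∀ i j, ∀ x ∈ A i, ∀ y ∈ A j, c (x, y) ≤ K i j) →
        ∫⁻ q, c q ∂lam ≤ ∑ i, ∑ j, ENNReal.ofReal (π i j) * K i j := by
  let w : I → I → ℝ := fun i j => π i j / (μ.real (A i) * ν.real (A j))
  have hw0 : ∀ i j, 0 ≤ w i j := fun i j =>
    div_nonneg (hπ i j) (mul_nonneg measureReal_nonneg measureReal_nonneg)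
  have hz1 : ∀ i j, μ.real (A i) = 0 → π i j = 0 := by
    intro i j h
    rw [← h1, Finset.sum_eq_zero_iff_of_nonneg (fun j _ => hπ i j)] at h
    exact h j (Finset.mem_univ j)
  have hz2 : ∀ i j, ν.real (A j) = 0 → π i j = 0 := by
    intro i j h
    rw [← h2, Finset.sum_eq_zero_iff_of_nonneg (fun i _ => hπ i j)] at h
    exact h i (Finset.mem_univ i)
  have hw : ∀ i j, w i j * (μ.real (A i) * ν.real (A j)) = π i j := by
    intro i j
    by_cases ha : μ.real (A i) = 0
    · simp [ha, hz1 i j ha]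
    by_cases hb : ν.real (A j) = 0
    · simp [hb, hz2 i j hb]
    exact div_mul_cancel₀ _ (mul_ne_zero ha hb)
  have hwm : ∀ i j, ENNReal.ofReal (w i j) * (μ (A i) * ν (A j)) = ENNReal.ofReal (π i j) := by
    intro i j
    rw [← hw i j, ENNReal.ofReal_mul (hw0 i j), ENNReal.ofReal_mul measureReal_nonneg,
      ofReal_measureReal, ofReal_measureReal]
  refine ⟨∑ i, ∑ j, ENNReal.ofReal (w i j) • (μ.restrict (A i)).prod (ν.restrict (A j)),
    ?_, ?_, ?_⟩
  · rw [Measure.map_finset_sum measurable_fst.aemeasurable]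
    conv_rhs => rw [← sum_restrict_partition A hA hdisj hun μ]
    refine Finset.sum_congr rfl fun i _ => ?_
    rw [Measure.map_finset_sum measurable_fst.aemeasurable]
    simp_rw [Measure.map_smul, Measure.map_fst_prod, smul_smul, ← Finset.sum_smul,
      Measure.restrict_apply_univ]
    by_cases ha : μ (A i) = 0
    · rw [Measure.restrict_eq_zero.2 ha, smul_zero]
    · have : ∑ j, ENNReal.ofReal (w i j) * ν (A j) = 1 := by
        rw [← ENNReal.mul_left_inj ha (measure_ne_top μ _), one_mul, Finset.sum_mul]
        have : ∀ j, ENNReal.ofReal (w i j) * ν (A j) * μ (A i) = ENNReal.ofReal (π i j) := by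
          intro j; rw [← hwm i j]; ring
        simp_rw [this]
        rw [← ENNReal.ofReal_sum_of_nonneg (fun j _ => hπ i j), h1, ofReal_measureReal]
      rw [this, one_smul]
  · rw [Finset.sum_comm, Measure.map_finset_sum measurable_snd.aemeasurable]
    conv_rhs => rw [← sum_restrict_partition A hA hdisj hun ν]
    refine Finset.sum_congr rfl fun j _ => ?_
    rw [Measure.map_finset_sum measurable_snd.aemeasurable]
    simp_rw [Measure.map_smul, Measure.map_snd_prod, smul_smul, ← Finset.sum_smul,
      Measure.restrict_apply_univ]
    by_cases ha : ν (A j) = 0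
    · rw [Measure.restrict_eq_zero.2 ha, smul_zero]
    · have : ∑ i, ENNReal.ofReal (w i j) * μ (A i) = 1 := by
        rw [← ENNReal.mul_left_inj ha (measure_ne_top ν _), one_mul, Finset.sum_mul]
        have : ∀ i, ENNReal.ofReal (w i j) * μ (A i) * ν (A j) = ENNReal.ofReal (π i j) := by
          intro i; rw [← hwm i j]; ring
        simp_rw [this]
        rw [← ENNReal.ofReal_sum_of_nonneg (fun i _ => hπ i j), h2, ofReal_measureReal]
      rw [this, one_smul]
  · intro c K hcK
    simp_rw [lintegral_finsetSum_measure, lintegral_smul_measure]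
    refine Finset.sum_le_sum fun i _ => Finset.sum_le_sum fun j _ => ?_
    rw [Measure.prod_restrict, ← hwm i j, smul_eq_mul, mul_assoc]
    refine mul_le_mul_right ?_ _
    calc ∫⁻ q in A i ×ˢ A j, c q ∂(μ.prod ν) ≤ ∫⁻ q in A i ×ˢ A j, K i j ∂(μ.prod ν) :=
          setLIntegral_mono' ((hA i).prod (hA j)) fun q hq => hcK i j q.1 hq.1 q.2 hq.2
      _ = μ (A i) * ν (A j) * K i j := by
          rw [setLIntegral_const, Measure.prod_prod, mul_comm]

theorem bounded_duality {S E : Type*} [TopologicalSpace S] [MeasurableSpace S]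
    [OpensMeasurableSpace S]
    [PseudoMetricSpace E] (U : S → E) (hU : Continuous U) (htb : TotallyBounded (range U))
    (μ ν : Measure S) [IsProbabilityMeasure μ] [IsProbabilityMeasure ν] (L : ℝ)
    (hL : ∀ f : S → ℝ, Continuous f → (∃ M, ∀ x, |f x| ≤ M) →
      (∀ x y, |f x - f y| ≤ dist (U x) (U y)) → ∫ x, f x ∂μ - ∫ x, f x ∂ν ≤ L)
    (ε : ℝ) (hε : 0 < ε) :
    ∃ lam : Measure (S × S), lam.map Prod.fst = μ ∧ lam.map Prod.snd = ν ∧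
      ∫⁻ q, ENNReal.ofReal (dist (U q.1) (U q.2)) ∂lam ≤ ENNReal.ofReal (L + ε) := by
  classical
  obtain ⟨δ, hδ, hδε⟩ : ∃ δ : ℝ, 0 < δ ∧ 4 * δ = ε := ⟨ε / 4, by positivity, by ring⟩
  obtain ⟨t, hts, htf, htc⟩ := totallyBounded_iff_subset.1 htb _ (Metric.dist_mem_uniformity hδ)
  obtain ⟨m, e, -, he⟩ := htf.fin_param
  have hy : ∀ i, ∃ y, U y = e i := fun i => hts (he ▸ mem_range_self i)
  choose y hy using hy
  let V : Fin m → Set S := fun i => {x | dist (U x) (U (y i)) < δ}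
  have hVo : ∀ i, IsOpen (V i) := fun i =>
    isOpen_lt (hU.dist continuous_const) continuous_const
  have hVu : ⋃ i, V i = univ := by
    rw [eq_univ_iff_forall]
    intro x
    have := htc (mem_range_self x)
    simp only [mem_iUnion] at this
    obtain ⟨z, hz, hxz⟩ := this
    obtain ⟨i, rfl⟩ := he ▸ hz
    refine mem_iUnion.2 ⟨i, ?_⟩
    change dist _ _ < δ
    rw [hy]; exact hxz
  let A : Fin m → Set S := disjointed V
  have hA : ∀ i, MeasurableSet (A i) := fun i =>
    disjointedRec (fun _ _ ht => MeasurableSet.diff ht (hVo _).measurableSet) (hVo i).measurableSet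
  have hdisj : Pairwise (Function.onFun Disjoint A) := disjoint_disjointed V
  have hun : ⋃ i, A i = univ := by rw [iUnion_disjointed, hVu]
  have hAV : ∀ i, ∀ x ∈ A i, dist (U x) (U (y i)) < δ := fun i x hx => disjointed_subset V i hx
  have hne : Nonempty (Fin m) := by
    obtain ⟨x⟩ := nonempty_of_isProbabilityMeasure μ
    have : x ∈ ⋃ i, A i := hun ▸ mem_univ x
    exact ⟨(mem_iUnion.1 this).choose⟩
  have hsum : ∀ (μ : Measure S) [IsProbabilityMeasure μ], ∑ i, μ.real (A i) = 1 := by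
    intro μ _
    have := congrArg (fun m : Measure S => m univ) (sum_restrict_partition A hA hdisj hun μ)
    simp only [Measure.finsetSum_apply, Measure.restrict_apply_univ, measure_univ] at this
    simp_rw [measureReal_def]
    rw [← ENNReal.toReal_sum (fun i _ => measure_ne_top μ _), this, ENNReal.toReal_one]
  have hdisc : ∀ (μ : Measure S) [IsProbabilityMeasure μ] (F : S → ℝ) (f : Fin m → ℝ),
      Integrable F μ → (∀ i, ∀ x ∈ A i, |F x - f i| ≤ δ) →
      |∫ x, F x ∂μ - ∑ i, f i * μ.real (A i)| ≤ δ := by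
    intro μ _ F f hF hFf
    have h1 : ∫ x, F x ∂μ = ∑ i, ∫ x in A i, F x ∂μ := by
      rw [← integral_iUnion_fintype hA hdisj (fun i => hF.integrableOn), hun,
        Measure.restrict_univ]
    have h2 : ∀ i, |∫ x in A i, F x ∂μ - f i * μ.real (A i)| ≤ δ * μ.real (A i) := by
      intro i
      have : ∫ x in A i, F x ∂μ - f i * μ.real (A i) = ∫ x in A i, (F x - f i) ∂μ := by
        rw [integral_sub hF.integrableOn (integrable_const _), setIntegral_const, smul_eq_mul,
          mul_comm]
      rw [this, ← Real.norm_eq_abs]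
      exact norm_setIntegral_le_of_norm_le_const (measure_lt_top μ _) (hFf i)
    rw [h1, ← Finset.sum_sub_distrib]
    calc _ ≤ ∑ i, |∫ x in A i, F x ∂μ - f i * μ.real (A i)| := Finset.abs_sum_le_sum_abs _ _
      _ ≤ ∑ i, δ * μ.real (A i) := Finset.sum_le_sum fun i _ => h2 i
      _ = δ := by rw [← Finset.mul_sum, hsum, mul_one]
  obtain ⟨π, hπ0, hπ1, hπ2, hπc⟩ := finite_duality (fun i j => dist (U (y i)) (U (y j)))
    (fun i => dist_self _) (fun i j => dist_comm _ _) (fun i j k => dist_triangle _ _ _)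
    (fun i => μ.real (A i)) (fun i => ν.real (A i)) (fun i => measureReal_nonneg)
    (fun i => measureReal_nonneg) (hsum μ) (hsum ν) (L + 2 * δ) (by
      intro f hf
      let F : S → ℝ := fun x =>
        Finset.univ.inf' Finset.univ_nonempty fun i => dist (U x) (U (y i)) + f i
      have hFc : Continuous F :=
        Continuous.finset_inf'_apply _ fun i _ => (hU.dist continuous_const).add continuous_const
      have hFl : ∀ x z, F x ≤ F z + dist (U x) (U z) := fun x z => by
        rw [← sub_le_iff_le_add]
        refine Finset.le_inf' _ _ fun i _ => ?_
        have := Finset.inf'_le (fun i => dist (U x) (U (y i)) + f i) (Finset.mem_univ i)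
        have := dist_triangle (U x) (U z) (U (y i))
        simp only [F] at *; linarith
      have hFl' : ∀ x z, |F x - F z| ≤ dist (U x) (U z) := fun x z => by
        have := hFl x z
        have := hFl z x
        rw [dist_comm] at this
        rw [abs_le]; constructor <;> linarith
      have hFy : ∀ i, F (y i) = f i := by
        intro i
        refine le_antisymm ?_ ?_
        · have := Finset.inf'_le (fun j => dist (U (y i)) (U (y j)) + f j) (Finset.mem_univ i)
          simpa using this
        · refine Finset.le_inf' _ _ fun j _ => ?_
          have := abs_le.1 (hf i j)
          linarith [this.2]
      have hFb : ∃ M, ∀ x, |F x| ≤ M := by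
        obtain ⟨i⟩ := hne
        obtain ⟨M, hM⟩ := Metric.isBounded_iff.1 htb.isBounded
        refine ⟨M + |f i|, fun x => ?_⟩
        have h1 := hFl' x (y i)
        rw [hFy] at h1
        have h2 := hM (mem_range_self x) (mem_range_self (y i))
        have h3 := abs_sub_abs_le_abs_sub (F x) (f i)
        linarith
      have hFi : ∀ (μ : Measure S) [IsProbabilityMeasure μ], Integrable F μ := by
        intro μ _
        obtain ⟨M, hM⟩ := hFb
        exact Integrable.of_bound hFc.measurable.aestronglyMeasurable M
          (Eventually.of_forall hM)
      have hFA : ∀ i, ∀ x ∈ A i, |F x - f i| ≤ δ := fun i x hx => by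
        rw [← hFy i]
        exact (hFl' x (y i)).trans (hAV i x hx).le
      have h0 := hL F hFc hFb hFl'
      have h1 := abs_le.1 (hdisc μ F f (hFi μ) hFA)
      have h2 := abs_le.1 (hdisc ν F f (hFi ν) hFA)
      linarith [h1.1, h2.2])
  obtain ⟨lam, hl1, hl2, hl3⟩ := glue_partition A hA hdisj hun μ ν π hπ0 hπ1 hπ2
  refine ⟨lam, hl1, hl2, ?_⟩
  refine (hl3 _ (fun i j => ENNReal.ofReal (dist (U (y i)) (U (y j)) + 2 * δ)) ?_).trans ?_
  · intro i j x hx z hz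
    refine ENNReal.ofReal_le_ofReal ?_
    have h1 := hAV i x hx
    have h2 := hAV j z hz
    have h3 := dist_triangle4 (U x) (U (y i)) (U (y j)) (U z)
    rw [dist_comm (U (y j))] at h3
    change dist (U x) (U z) ≤ _
    linarith
  · have hnn : ∀ i j, 0 ≤ dist (U (y i)) (U (y j)) + 2 * δ := fun i j => by positivity
    simp_rw [← ENNReal.ofReal_mul (hπ0 _ _)]
    simp_rw [← ENNReal.ofReal_sum_of_nonneg (fun j _ => mul_nonneg (hπ0 _ j) (hnn _ j))]
    rw [← ENNReal.ofReal_sum_of_nonneg (fun i _ => Finset.sum_nonneg fun j _ =>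
      mul_nonneg (hπ0 _ j) (hnn _ j))]
    refine ENNReal.ofReal_le_ofReal ?_
    simp_rw [mul_add, Finset.sum_add_distrib, ← Finset.sum_mul, hπ1, hsum μ]
    linarith

section Final

variable {S : Type*} [TopologicalSpace S] [PolishSpace S] [MeasurableSpace S] [BorelSpace S]

theorem exists_countable_family {S : Type*} [TopologicalSpace S] [SecondCountableTopology S]
    (c : S → S → ℝ) (hc0 : ∀ x y, 0 ≤ c x y) (hstar : StarCond c) :
    ∃ u : ℕ → S → ℝ, (∀ k, u k ∈ LipC c) ∧
      ∀ x y, ∀ r < c x y, ∃ k, r < |u k x - u k y| := by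
  have hzero : (fun _ => (0 : ℝ)) ∈ LipC c :=
    ⟨continuous_const, ⟨0, by simp⟩, fun x y => by simpa using hc0 x y⟩
  let V : ℚ → LipC c → Set (S × S) := fun q u => {p | (q : ℝ) < |u.1 p.1 - u.1 p.2|}
  have hV : ∀ q u, IsOpen (V q u) := by
    intro q u
    have := u.2.1
    exact isOpen_lt continuous_const
      ((this.comp continuous_fst).sub (this.comp continuous_snd)).abs
  choose T hTc hT using fun q => TopologicalSpace.isOpen_iUnion_countable (V q) (hV q)
  let W : Set (LipC c) := {⟨_, hzero⟩} ∪ ⋃ q, T q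
  have hWc : W.Countable := (countable_singleton _).union (countable_iUnion hTc)
  have hWn : W.Nonempty := ⟨_, Or.inl rfl⟩
  obtain ⟨e, he⟩ := hWc.exists_eq_range hWn
  refine ⟨fun k => (e k).1, fun k => (e k).2, ?_⟩
  intro x y r hr
  rw [hstar x y] at hr
  obtain ⟨_, ⟨v, hv, rfl⟩, hrv⟩ := exists_lt_of_lt_csSup
    (show {r : ℝ | ∃ u ∈ LipC c, r = |u x - u y|}.Nonempty from ⟨_, _, hzero, rfl⟩) hr
  obtain ⟨q, hq1, hq2⟩ := exists_rat_btwn hrv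
  have hmem : (x, y) ∈ ⋃ i, V q i := mem_iUnion.2 ⟨⟨v, hv⟩, hq2⟩
  rw [← hT q] at hmem
  obtain ⟨w, hw, hw'⟩ := mem_iUnion₂.1 hmem
  have hwW : w ∈ range e := he ▸ Or.inr (mem_iUnion.2 ⟨q, hw⟩)
  obtain ⟨k, rfl⟩ := hwW
  exact ⟨k, hq1.trans hw'⟩

/-- first `n+1` functions of a sequence as a vector -/
def vecU {S : Type*} (u : ℕ → S → ℝ) (n : ℕ) (x : S) : Fin (n + 1) → ℝ := fun k => u k x

theorem dist_vecU_le {S : Type*} [TopologicalSpace S] {c : S → S → ℝ} (hc0 : ∀ x y, 0 ≤ c x y)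
    {u : ℕ → S → ℝ} (hu : ∀ k, u k ∈ LipC c) (n : ℕ) (x y : S) :
    dist (vecU u n x) (vecU u n y) ≤ c x y := by
  rw [dist_pi_le_iff (hc0 x y)]
  intro k
  rw [Real.dist_eq]
  exact (hu k).2.2 x y

theorem continuous_vecU {S : Type*} [TopologicalSpace S] {c : S → S → ℝ}
    {u : ℕ → S → ℝ} (hu : ∀ k, u k ∈ LipC c) (n : ℕ) : Continuous (vecU u n) :=
  continuous_pi fun k => (hu k).1

theorem totallyBounded_vecU {S : Type*} [TopologicalSpace S] {c : S → S → ℝ}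
    {u : ℕ → S → ℝ} (hu : ∀ k, u k ∈ LipC c) (n : ℕ) : TotallyBounded (range (vecU u n)) := by
  choose M hM using fun k => (hu k).2.1
  have hK : IsCompact (Set.pi univ fun k : Fin (n + 1) => Icc (-(M k)) (M k)) :=
    isCompact_univ_pi fun k => isCompact_Icc
  refine hK.totallyBounded.subset ?_
  rintro _ ⟨x, rfl⟩ k -
  exact abs_le.1 (hM k x)

theorem dist_vecU_mono {S : Type*} (u : ℕ → S → ℝ) (x y : S) :
    Monotone fun n => dist (vecU u n x) (vecU u n y) := by
  intro m n hmn
  refine (dist_pi_le_iff dist_nonneg).2 fun k => ?_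
  exact dist_le_pi_dist (vecU u n x) (vecU u n y) ⟨k, by omega⟩

theorem iSup_vecU {S : Type*} [TopologicalSpace S] {c : S → S → ℝ} (hc0 : ∀ x y, 0 ≤ c x y)
    {u : ℕ → S → ℝ} (hu : ∀ k, u k ∈ LipC c)
    (hs : ∀ x y, ∀ r < c x y, ∃ k, r < |u k x - u k y|) (x y : S) :
    ENNReal.ofReal (c x y) = ⨆ n, ENNReal.ofReal (dist (vecU u n x) (vecU u n y)) := by
  apply le_antisymm
  · refine le_of_forall_lt fun a ha => ?_
    have ha' : a ≠ ⊤ := ha.ne_top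
    have h1 : a.toReal < c x y := (ENNReal.lt_ofReal_iff_toReal_lt ha').1 ha
    obtain ⟨k, hk⟩ := hs x y _ h1
    refine lt_of_lt_of_le ?_ (le_iSup _ k)
    rw [ENNReal.lt_ofReal_iff_toReal_lt ha']
    refine hk.trans_le ?_
    have := dist_le_pi_dist (vecU u k x) (vecU u k y) (Fin.last k)
    simpa [vecU, Real.dist_eq] using this
  · exact iSup_le fun n => ENNReal.ofReal_le_ofReal (dist_vecU_le hc0 hu n x y)

theorem continuous_lint_vecU {c : S → S → ℝ}
    {u : ℕ → S → ℝ} (hu : ∀ k, u k ∈ LipC c) (n : ℕ) :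
    Continuous fun π : ProbabilityMeasure (S × S) =>
      ∫⁻ q, ENNReal.ofReal (dist (vecU u n q.1) (vecU u n q.2)) ∂(π : Measure (S × S)) := by
  have hcont : Continuous fun q : S × S => nndist (vecU u n q.1) (vecU u n q.2) :=
    ((continuous_vecU hu n).comp continuous_fst).nndist
      ((continuous_vecU hu n).comp continuous_snd)
  have hb := (totallyBounded_vecU hu n).isBounded
  obtain ⟨C, hC⟩ := Metric.isBounded_iff.1 hb
  let F : BoundedContinuousFunction (S × S) NNReal :=
    BoundedContinuousFunction.mkOfBound ⟨_, hcont⟩ (2 * C) (by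
      intro a b
      have h1 := hC (mem_range_self a.1) (mem_range_self a.2)
      have h2 := hC (mem_range_self b.1) (mem_range_self b.2)
      rw [NNReal.dist_eq]
      simp only [ContinuousMap.coe_mk, coe_nndist]
      rw [abs_le]
      have h3 := dist_nonneg (x := vecU u n a.1) (y := vecU u n a.2)
      have h4 := dist_nonneg (x := vecU u n b.1) (y := vecU u n b.2)
      constructor <;> linarith)
  have := ProbabilityMeasure.continuous_lintegral_boundedContinuousFunction F
  have heq : ∀ q : S × S, ENNReal.ofReal (dist (vecU u n q.1) (vecU u n q.2))
      = ((F q : NNReal) : ℝ≥0∞) := by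
    intro q
    change _ = ((nndist (vecU u n q.1) (vecU u n q.2) : NNReal) : ℝ≥0∞)
    rw [← coe_nndist, ENNReal.ofReal_coe_nnreal]
  simp_rw [heq]
  exact this

theorem lint_cost_eq {c : S → S → ℝ} (hc0 : ∀ x y, 0 ≤ c x y)
    {u : ℕ → S → ℝ} (hu : ∀ k, u k ∈ LipC c)
    (hs : ∀ x y, ∀ r < c x y, ∃ k, r < |u k x - u k y|) (π : Measure (S × S)) :
    ∫⁻ q, ENNReal.ofReal (c q.1 q.2) ∂π
      = ⨆ n, ∫⁻ q, ENNReal.ofReal (dist (vecU u n q.1) (vecU u n q.2)) ∂π := by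
  simp_rw [iSup_vecU hc0 hu hs]
  apply lintegral_iSup
  · intro n
    exact (ENNReal.continuous_ofReal.comp (((continuous_vecU hu n).comp continuous_fst).dist
      ((continuous_vecU hu n).comp continuous_snd))).measurable
  · intro m n hmn q
    exact ENNReal.ofReal_le_ofReal (dist_vecU_mono u q.1 q.2 hmn)

theorem lsc_cost {c : S → S → ℝ} (hc0 : ∀ x y, 0 ≤ c x y) (hstar : StarCond c) :
    LowerSemicontinuous fun π : ProbabilityMeasure (S × S) =>
      ∫⁻ q, ENNReal.ofReal (c q.1 q.2) ∂(π : Measure (S × S)) := by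
  obtain ⟨u, hu, hs⟩ := exists_countable_family c hc0 hstar
  simp_rw [lint_cost_eq hc0 hu hs]
  exact lowerSemicontinuous_iSup fun n => (continuous_lint_vecU hu n).lowerSemicontinuous

theorem margins_eq_iff (π : ProbabilityMeasure (S × S)) (μ ν : ProbabilityMeasure S) :
    margins π = (μ, ν) ↔ (π : Measure (S × S)).map Prod.fst = (μ : Measure S) ∧
      (π : Measure (S × S)).map Prod.snd = (ν : Measure S) := by
  rw [margins, Prod.ext_iff]
  constructor
  · rintro ⟨h1, h2⟩
    exact ⟨congrArg ProbabilityMeasure.toMeasure h1, congrArg ProbabilityMeasure.toMeasure h2⟩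
  · rintro ⟨h1, h2⟩
    exact ⟨ProbabilityMeasure.toMeasure_injective h1, ProbabilityMeasure.toMeasure_injective h2⟩

theorem lipDist_le_KR (c : S → S → ℝ) (μ ν : ProbabilityMeasure S) :
    lipDist c (μ : Measure S) (ν : Measure S) ≤ KR c (μ : Measure S) (ν : Measure S) := by
  refine le_iInf₂ fun π hπ => iSup₂_le fun u hu => ?_
  obtain ⟨hp, h1, h2⟩ := hπ
  obtain ⟨huc, ⟨M, hM⟩, hul⟩ := hu
  have i1 : Integrable (fun q : S × S => u q.1) π :=
    Integrable.of_bound (huc.comp continuous_fst).aestronglyMeasurable M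
      (ae_of_all _ fun q => hM q.1)
  have i2 : Integrable (fun q : S × S => u q.2) π :=
    Integrable.of_bound (huc.comp continuous_snd).aestronglyMeasurable M
      (ae_of_all _ fun q => hM q.2)
  rw [← h1, ← h2, integral_map measurable_fst.aemeasurable huc.aestronglyMeasurable,
    integral_map measurable_snd.aemeasurable huc.aestronglyMeasurable, ← integral_sub i1 i2,
    ← Real.norm_eq_abs, ofReal_norm]
  refine (enorm_integral_le_lintegral_enorm _).trans (lintegral_mono fun q => ?_)
  rw [← ofReal_norm]
  exact ENNReal.ofReal_le_ofReal (hul q.1 q.2)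

set_option maxHeartbeats 2000000 in
theorem KR_le_lipDist {c : S → S → ℝ} (hc0 : ∀ x y, 0 ≤ c x y) (hstar : StarCond c)
    (μ ν : ProbabilityMeasure S) :
    KR c (μ : Measure S) (ν : Measure S) ≤ lipDist c (μ : Measure S) (ν : Measure S) := by
  by_cases htop : lipDist c (μ : Measure S) (ν : Measure S) = ⊤
  · rw [htop]; exact le_top
  obtain ⟨u, hu, hs⟩ := exists_countable_family c hc0 hstar
  set L : ℝ := (lipDist c (μ : Measure S) (ν : Measure S)).toReal with hLdef
  have hL0 : 0 ≤ L := ENNReal.toReal_nonneg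
  let K : ℕ → Set (ProbabilityMeasure (S × S)) := fun n =>
    margins ⁻¹' {(μ, ν)} ∩ {π | ∫⁻ q, ENNReal.ofReal (dist (vecU u n q.1) (vecU u n q.2))
      ∂(π : Measure (S × S)) ≤ ENNReal.ofReal (L + 1 / ((n : ℝ) + 1))}
  have hcomp : IsCompact (margins ⁻¹' {(μ, ν)}) :=
    isProperMap_margins.isCompact_preimage isCompact_singleton
  have hclosed : ∀ n, IsClosed {π : ProbabilityMeasure (S × S) |
      ∫⁻ q, ENNReal.ofReal (dist (vecU u n q.1) (vecU u n q.2))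
      ∂(π : Measure (S × S)) ≤ ENNReal.ofReal (L + 1 / ((n : ℝ) + 1))} := fun n =>
    isClosed_le (continuous_lint_vecU hu n) continuous_const
  have hne : ∀ n, (K n).Nonempty := by
    intro n
    obtain ⟨lam, h1, h2, h3⟩ := bounded_duality (vecU u n) (continuous_vecU hu n)
      (totallyBounded_vecU hu n) (μ : Measure S) (ν : Measure S) L (by
        intro f hf hfb hfl
        have hmem : f ∈ LipC c := ⟨hf, hfb, fun x y => (hfl x y).trans (dist_vecU_le hc0 hu n x y)⟩
        have := le_iSup₂ (f := fun (u : S → ℝ) (_ : u ∈ LipC c) =>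
          ENNReal.ofReal |∫ x, u x ∂(μ : Measure S) - ∫ x, u x ∂(ν : Measure S)|) f hmem
        have h' := (ENNReal.ofReal_le_iff_le_toReal htop).1 this
        exact (le_abs_self _).trans h') (1 / ((n : ℝ) + 1)) (by positivity)
    have hp : IsProbabilityMeasure lam := by
      constructor
      have := congrArg (fun m : Measure S => m univ) h1
      simpa [Measure.map_apply measurable_fst MeasurableSet.univ] using this
    exact ⟨⟨lam, hp⟩, (margins_eq_iff _ _ _).2 ⟨h1, h2⟩, h3⟩
  obtain ⟨π, hπ⟩ := IsCompact.nonempty_iInter_of_sequence_nonempty_isCompact_isClosed K (by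
      intro n π hπ
      refine ⟨hπ.1, (lintegral_mono fun q => ?_).trans (hπ.2.trans ?_)⟩
      · exact ENNReal.ofReal_le_ofReal (dist_vecU_mono u q.1 q.2 (Nat.le_succ n))
      · refine ENNReal.ofReal_le_ofReal ?_
        have : (1 : ℝ) / (((n + 1 : ℕ) : ℝ) + 1) ≤ 1 / ((n : ℝ) + 1) := by
          apply one_div_le_one_div_of_le (by positivity)
          push_cast; linarith
        linarith) hne (hcomp.inter_right (hclosed 0))
    (fun n => hcomp.isClosed.inter (hclosed n))
  rw [mem_iInter] at hπ
  have hm := (margins_eq_iff _ _ _).1 (hπ 0).1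
  refine (iInf₂_le (π : Measure (S × S)) ⟨inferInstance, hm.1, hm.2⟩).trans ?_
  rw [lint_cost_eq hc0 hu hs]
  refine iSup_le fun n => ?_
  have key : ∀ m, n ≤ m → ∫⁻ q, ENNReal.ofReal (dist (vecU u n q.1) (vecU u n q.2))
      ∂(π : Measure (S × S)) ≤ ENNReal.ofReal (L + 1 / ((m : ℝ) + 1)) := fun m hm =>
    (lintegral_mono fun q : S × S => ENNReal.ofReal_le_ofReal (dist_vecU_mono u q.1 q.2 hm)).trans
      (hπ m).2
  have hlim : Tendsto (fun m : ℕ => ENNReal.ofReal (L + 1 / ((m : ℝ) + 1))) atTop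
      (𝓝 (ENNReal.ofReal (L + 0))) :=
    ENNReal.tendsto_ofReal (tendsto_const_nhds.add tendsto_one_div_add_atTop_nhds_zero_nat)
  have := ge_of_tendsto hlim (eventually_atTop.2 ⟨n, key⟩)
  rwa [add_zero, hLdef, ENNReal.ofReal_toReal htop] at this

theorem le_univCompletion {α : Type*} (m : MeasurableSpace α) : m ≤ univCompletion m := by
  refine le_iInf₂ fun μ _ => ?_
  intro s hs
  exact (MeasurableSet.nullMeasurableSet hs : NullMeasurableSet s μ)

end Final

end Helpers

/-- **Point 1 of the parametrized Kantorovich–Rubinštein theorem**: for measurable families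
of probability measures `ω ↦ μ_ω`, `ω ↦ ν_ω` (with a joint integrability condition on the
cost), `KR_c(μ_ω,ν_ω) = ℓ_c(μ_ω,ν_ω)` for every `ω`, and there is a map `ω ↦ λ_ω`,
measurable for the universal completion of `𝒜`, with `λ_ω ∈ D(μ_ω,ν_ω)` an optimal
coupling realizing this value. -/
theorem parametrized_KR_selection
    {S : Type*} [TopologicalSpace S] [PolishSpace S] [MeasurableSpace S] [BorelSpace S]
    {Ω : Type*} [mΩ : MeasurableSpace Ω] (P : Measure Ω) [IsProbabilityMeasure P]
    (c : S → S → ℝ) (hc0 : ∀ x y, 0 ≤ c x y) (hstar : StarCond c)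
    (μ ν : Ω → ProbabilityMeasure S)
    (hμ : @Measurable Ω (ProbabilityMeasure S) mΩ (borel (ProbabilityMeasure S)) μ)
    (hν : @Measurable Ω (ProbabilityMeasure S) mΩ (borel (ProbabilityMeasure S)) ν)
    (x₀ : S)
    (hμint : ∫⁻ ω, ∫⁻ x, ENNReal.ofReal (c x x₀) ∂(μ ω : Measure S) ∂P < ⊤)
    (hνint : ∫⁻ ω, ∫⁻ x, ENNReal.ofReal (c x x₀) ∂(ν ω : Measure S) ∂P < ⊤) :
    (∀ ω, KR c (μ ω : Measure S) (ν ω : Measure S)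
        = lipDist c (μ ω : Measure S) (ν ω : Measure S)) ∧
    ∃ lam : Ω → ProbabilityMeasure (S × S),
      (@Measurable Ω (ProbabilityMeasure (S × S)) (univCompletion mΩ)
        (borel (ProbabilityMeasure (S × S))) lam) ∧
      ∀ ω, (lam ω : Measure (S × S)).map Prod.fst = (μ ω : Measure S) ∧
        (lam ω : Measure (S × S)).map Prod.snd = (ν ω : Measure S) ∧
        KR c (μ ω : Measure S) (ν ω : Measure S)
          = ∫⁻ p, ENNReal.ofReal (c p.1 p.2) ∂(lam ω : Measure (S × S)) := by
  obtain ⟨lam, hlam, hopt⟩ := exists_opt_selection μ ν hμ hν _ (lsc_cost hc0 hstar)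
  refine ⟨fun ω => le_antisymm (KR_le_lipDist hc0 hstar _ _) (lipDist_le_KR c _ _), lam,
    hlam.mono (le_univCompletion mΩ) le_rfl, fun ω => ?_⟩
  obtain ⟨h, hmin⟩ := hopt ω
  have hm := (margins_eq_iff _ _ _).1 h
  refine ⟨hm.1, hm.2, le_antisymm ?_ ?_⟩
  · exact iInf₂_le (lam ω : Measure (S × S)) ⟨inferInstance, hm.1, hm.2⟩
  · refine le_iInf₂ fun π hπ => ?_
    exact hmin ⟨π, hπ.1⟩ ((margins_eq_iff _ _ _).2 hπ.2)

end
end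

section
/- Let S be a Polish space, c : S × S → [0,∞) satisfy condition (★), and (Ω, 𝒜, P) a probability space. Let μ, ν be probability measures on Ω × S whose Ω-margin equals P, with ∫_{Ω×S} c(x, x₀) dμ(ω,x) < ∞ and ∫_{Ω×S} c(x, x₀) dν(ω,x) < ∞ for some x₀ ∈ S, and let ω ↦ μ_ω, ω ↦ ν_ω be disintegrations (measurable kernels) of μ and ν with respect to P. Let ω ↦ λ_ω be an 𝒜*-measurable selection of optimal couplings, i.e. λ_ω has margins μ_ω, ν_ω and ∫ c dλ_ω = KR_c(μ_ω, ν_ω) for each ω, and let λ be the probability on Ω × S × S defined by λ(A × B × C) = ∫_A λ_ω(B × C) dP(ω). Then KR^par_c(μ,ν) = ∫_{Ω×S×S} c(x,y) dλ(ω,x,y) = ℓ^par_c(μ,ν); in particular λ has margins μ and ν (in the parametrized sense) and the infimum defining KR^par_c(μ,ν) is attained at λ. -/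
open MeasureTheory ProbabilityTheory ENNReal Set

noncomputable section

/-- `D^par(μ,ν)`: probability measures on `Ω × S × S` with `π(·×·×S) = μ` and
`π(·×S×·) = ν`. -/
def ParamCouplings {Ω S : Type*} [MeasurableSpace Ω] [MeasurableSpace S]
    (μ ν : Measure (Ω × S)) : Set (Measure (Ω × S × S)) :=
  {π | IsProbabilityMeasure π ∧ π.map (fun p => (p.1, p.2.1)) = μ ∧
    π.map (fun p => (p.1, p.2.2)) = ν}

/-- The parametrized Kantorovich–Rubinštein functional `KR^par_c(μ,ν)`. -/
def paramKR {Ω S : Type*} [MeasurableSpace Ω] [MeasurableSpace S]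
    (c : S → S → ℝ) (μ ν : Measure (Ω × S)) : ℝ≥0∞ :=
  ⨅ π ∈ ParamCouplings μ ν, ∫⁻ p, ENNReal.ofReal (c p.2.1 p.2.2) ∂π

/-- The parametrized dual functional `ℓ^par_c(μ,ν)`, the supremum of `μ(f) - ν(f)`
over measurable integrands `f` with `f(ω,·) ∈ Lip_c` for every `ω`. -/
def paramLipDist {Ω S : Type*} [MeasurableSpace Ω] [TopologicalSpace S] [MeasurableSpace S]
    (c : S → S → ℝ) (μ ν : Measure (Ω × S)) : ℝ≥0∞ :=
  ⨆ f ∈ {f : Ω × S → ℝ | Measurable f ∧ ∀ ω, (fun x => f (ω, x)) ∈ LipC c},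
    ENNReal.ofReal (∫ p, f p ∂μ - ∫ p, f p ∂ν)

/-- `ω ↦ κ ω` is a disintegration of the measure `μ` on `Ω × S` with respect to `P`. -/
def IsDisintegration {Ω S : Type*} [MeasurableSpace Ω] [MeasurableSpace S]
    (P : Measure Ω) (μ : Measure (Ω × S)) (κ : Ω → Measure S) : Prop :=
  (∀ ω, IsProbabilityMeasure (κ ω)) ∧
  (∀ B : Set S, MeasurableSet B → Measurable (fun ω => κ ω B)) ∧
  (∀ f : Ω × S → ℝ≥0∞, Measurable f →
    ∫⁻ p, f p ∂μ = ∫⁻ ω, ∫⁻ x, f (ω, x) ∂(κ ω) ∂P)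

theorem finite_dual {ι : Type*} [Fintype ι] (d : ι → ι → ℝ) (p q : ι → ℝ)
    (hp : ∀ i, 0 ≤ p i) (hq : ∀ i, 0 ≤ q i) (hp1 : ∑ i, p i = 1) (hq1 : ∑ i, q i = 1) (T : ℝ)
    (hT : ∀ w : ι → ι → ℝ, (∀ i j, 0 ≤ w i j) → (∀ i, ∑ j, w i j = p i) →
      (∀ j, ∑ i, w i j = q j) → T < ∑ i, ∑ j, w i j * d i j) :
    ∃ φ ψ : ι → ℝ, (∀ i j, φ i + ψ j ≤ d i j) ∧ T ≤ ∑ i, φ i * p i + ∑ j, ψ j * q j := by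
  classical
  let L : (ι × ι → ℝ) →ₗ[ℝ] ((ι → ℝ) × (ι → ℝ) × ℝ) :=
    { toFun := fun w => (fun i => ∑ j, w (i, j), fun j => ∑ i, w (i, j),
        ∑ i, ∑ j, w (i, j) * d i j)
      map_add' := by
        intro x y
        ext <;> simp [Finset.sum_add_distrib, add_mul]
      map_smul' := by
        intro a x
        ext <;> simp [Finset.mul_sum, mul_assoc] }
  have hLc : Continuous L := L.continuous_of_finiteDimensional
  let K := L '' stdSimplex ℝ (ι × ι)
  have hK : IsCompact K := (isCompact_stdSimplex _ _).image hLc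
  have hKc : Convex ℝ K := (convex_stdSimplex ℝ (ι × ι)).linear_image L
  let B : Set ((ι → ℝ) × (ι → ℝ) × ℝ) := {p} ×ˢ {q} ×ˢ Iic T
  have hB : IsClosed B := isClosed_singleton.prod (isClosed_singleton.prod isClosed_Iic)
  have hBc : Convex ℝ B := (convex_singleton _).prod ((convex_singleton _).prod (convex_Iic _))
  have hdis : Disjoint K B := by
    rw [Set.disjoint_left]
    rintro _ ⟨w, hw, rfl⟩ ⟨h1, h2, h3⟩
    have := hT (fun i j => w (i, j)) (fun i j => hw.1 _) (fun i => congrFun h1 i)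
      (fun i => congrFun h2 i)
    exact absurd h3 (not_le.2 this)
  obtain ⟨f, u, v, hu, huv, hv⟩ := geometric_hahn_banach_compact_closed hKc hK hBc hB hdis
  have hf : ∀ a b s, f (a, b, s) = ∑ i, a i * f (Pi.single i 1, 0, 0)
      + ∑ i, b i * f (0, Pi.single i 1, 0) + s * f (0, 0, 1) := by
    intro a b s
    have e1 : ((a, b, s) : (ι → ℝ) × (ι → ℝ) × ℝ) = ∑ i, a i • (Pi.single i (1:ℝ), 0, 0)
      + ∑ i, b i • (0, Pi.single i (1:ℝ), 0) + s • (0, 0, 1) := by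
      ext <;> simp [Finset.sum_apply, Prod.fst_sum, Prod.snd_sum, Pi.single_apply]
    rw [e1]; simp only [map_add, map_sum, map_smul, smul_eq_mul]
  set γ := f (0, 0, 1)
  have hγ0 : γ ≤ 0 := by
    by_contra h
    push Not at h
    let s := min T ((v - f (p, q, 0)) / γ)
    have h1 := hv (p, q, s) ⟨rfl, rfl, Set.mem_Iic.2 (min_le_left _ _)⟩
    rw [hf] at h1
    have h2 := hf p q 0
    have h3 : s * γ ≤ v - f (p, q, 0) := by
      rw [← le_div_iff₀ h]; exact min_le_right _ _
    linarith
  have hγ : γ < 0 := by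
    refine lt_of_le_of_ne hγ0 fun h => ?_
    have h1 := hv (p, q, T) ⟨rfl, rfl, Set.mem_Iic.2 (le_refl _)⟩
    have h2 := hu (L fun x => p x.1 * q x.2) ⟨_, ⟨fun x => mul_nonneg (hp _) (hq _), by
      simp [Fintype.sum_prod_type, ← Finset.mul_sum, hp1, hq1]⟩, rfl⟩
    have : L (fun x => p x.1 * q x.2) = (p, q, ∑ i, ∑ j, p i * q j * d i j) := by
      ext <;> simp [L, ← Finset.mul_sum, ← Finset.sum_mul, hp1, hq1]
    rw [this] at h2
    rw [hf, h] at h1 h2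
    linarith
  have hT' := hv (p, q, T) ⟨rfl, rfl, Set.mem_Iic.2 (le_refl _)⟩
  rw [hf] at hT'
  have hij : ∀ i j, f (Pi.single i 1, 0, 0) + f (0, Pi.single j 1, 0) + d i j * γ < u := by
    intro i j
    have h2 := hu (L (Pi.single (i, j) 1)) ⟨_, single_mem_stdSimplex ℝ _, rfl⟩
    have : L (Pi.single (i, j) 1) = (Pi.single i 1, Pi.single j 1, d i j) := by
      ext <;> simp [L, Pi.single_apply, Prod.ext_iff, ite_and, Finset.sum_ite_eq, eq_comm]
    rw [this, hf] at h2
    simpa [Pi.single_apply] using h2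
  set F := fun i => f (Pi.single i 1, 0, 0)
  set G := fun i => f (0, Pi.single i 1, 0)
  refine ⟨fun i => (F i - u) / (-γ), fun j => G j / (-γ), fun i j => ?_, ?_⟩
  · rw [← add_div, div_le_iff₀ (by linarith)]
    have := hij i j
    simp only [F, G]; linarith
  · have e1 : ∑ i, (F i - u) / (-γ) * p i + ∑ j, G j / (-γ) * q j
      = (∑ i, p i * F i + ∑ i, q i * G i - u) / (-γ) := by
      simp_rw [div_mul_eq_mul_div, ← Finset.sum_div, ← add_div, sub_mul, Finset.sum_sub_distrib,
        ← Finset.mul_sum, hp1, mul_comm (p _), mul_comm (q _)]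
      ring
    rw [e1, le_div_iff₀ (by linarith)]
    simp only [F, G]; linarith

/-- The inf-convolution test functions. -/
def testFun {S ι : Type*} (e : S → S → ℝ) (pt : ι → S) (q : ι → ℚ) (x : S) : ℝ :=
  ⨅ j, (e x (pt j) + (q j : ℝ))

theorem sum_cond_restrict {S ι : Type*} [MeasurableSpace S] [Fintype ι] (m : Measure S)
    [IsProbabilityMeasure m] (r : S → ι) (hr : ∀ i, MeasurableSet (r ⁻¹' {i})) :
    ∑ i, m (r ⁻¹' {i}) • cond m (r ⁻¹' {i}) = m := by
  have : ∀ i, m (r ⁻¹' {i}) • cond m (r ⁻¹' {i}) = m.restrict (r ⁻¹' {i}) := by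
    intro i
    rw [ProbabilityTheory.cond, smul_smul]
    by_cases h : m (r ⁻¹' {i}) = 0
    · rw [h, zero_mul, zero_smul, Measure.restrict_eq_zero.2 h]
    · rw [ENNReal.mul_inv_cancel h (measure_ne_top _ _), one_smul]
  simp_rw [this]
  ext A hA
  rw [Measure.finsetSum_apply]
  simp_rw [Measure.restrict_apply hA]
  rw [← measure_biUnion_finset]
  · congr 1; ext x; simp
  · intro i _ j _ hij
    refine Set.disjoint_left.2 fun x hx hy => hij ?_
    rw [← hx.2, ← hy.2]
  · exact fun i _ => hA.inter (hr i)

theorem glue_coupling {S ι : Type*} [MeasurableSpace S] [Fintype ι]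
    (m n : Measure S) [IsProbabilityMeasure m] [IsProbabilityMeasure n]
    (r : S → ι) (hr : ∀ i, MeasurableSet (r ⁻¹' {i}))
    (w : ι → ι → ℝ) (hw : ∀ i j, 0 ≤ w i j)
    (h1 : ∀ i, ∑ j, w i j = m.real (r ⁻¹' {i})) (h2 : ∀ j, ∑ i, w i j = n.real (r ⁻¹' {j}))
    (e : S → S → ℝ) (d : ι → ι → ℝ) (hd : ∀ x y, e x y ≤ d (r x) (r y)) 
    (hd0 : ∀ i j, 0 ≤ d i j) :
    ∃ π ∈ Couplings m n, ∫⁻ p, ENNReal.ofReal (e p.1 p.2) ∂π ≤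
      ENNReal.ofReal (∑ i, ∑ j, w i j * d i j) := by
  let M := fun i => cond m (r ⁻¹' {i})
  let N := fun i => cond n (r ⁻¹' {i})
  have hm : ∀ i, m (r ⁻¹' {i}) = ∑ j, ENNReal.ofReal (w i j) := by
    intro i
    rw [← ENNReal.ofReal_sum_of_nonneg (fun j _ => hw i j), h1, ofReal_measureReal]
  have hn : ∀ j, n (r ⁻¹' {j}) = ∑ i, ENNReal.ofReal (w i j) := by
    intro i
    rw [← ENNReal.ofReal_sum_of_nonneg (fun j _ => hw j i), h2, ofReal_measureReal]
  have hM : ∀ i j, ENNReal.ofReal (w i j) * M i univ = ENNReal.ofReal (w i j) := by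
    intro i j
    by_cases h : m (r ⁻¹' {i}) = 0
    · rw [hm, Finset.sum_eq_zero_iff] at h
      rw [h j (Finset.mem_univ _), zero_mul]
    · have := cond_isProbabilityMeasure h
      simp only [M]
      rw [measure_univ, mul_one]
  have hN : ∀ i j, ENNReal.ofReal (w i j) * N j univ = ENNReal.ofReal (w i j) := by
    intro i j
    by_cases h : n (r ⁻¹' {j}) = 0
    · rw [hn, Finset.sum_eq_zero_iff] at h
      rw [h i (Finset.mem_univ _), zero_mul]
    · have := cond_isProbabilityMeasure h
      simp only [N]
      rw [measure_univ, mul_one]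
  let π : Measure (S × S) := ∑ i, ∑ j, ENNReal.ofReal (w i j) • (M i).prod (N j)
  have hπ1 : π.map Prod.fst = m := by
    conv_rhs => rw [← sum_cond_restrict m r hr]
    ext A hA
    rw [Measure.map_apply measurable_fst hA, ← prod_univ]
    simp only [π, Measure.finsetSum_apply, Measure.smul_apply, Measure.prod_prod, smul_eq_mul, hm,
      Finset.sum_mul]
    refine Finset.sum_congr rfl fun i _ => Finset.sum_congr rfl fun j _ => ?_
    rw [← mul_assoc, mul_right_comm, hN]
  have hπ2 : π.map Prod.snd = n := by
    conv_rhs => rw [← sum_cond_restrict n r hr]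
    ext A hA
    rw [Measure.map_apply measurable_snd hA, ← univ_prod]
    simp only [π, Measure.finsetSum_apply, Measure.smul_apply, Measure.prod_prod, smul_eq_mul, hn,
      Finset.sum_mul]
    rw [Finset.sum_comm]
    refine Finset.sum_congr rfl fun i _ => Finset.sum_congr rfl fun j _ => ?_
    rw [← mul_assoc, hM]
  refine ⟨π, ⟨?_, hπ1, hπ2⟩, ?_⟩
  · refine ⟨?_⟩
    have : π.map Prod.fst univ = 1 := by rw [hπ1, measure_univ]
    rwa [Measure.map_apply measurable_fst MeasurableSet.univ, preimage_univ] at this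
  · have hsum : ENNReal.ofReal (∑ i, ∑ j, w i j * d i j)
        = ∑ i, ∑ j, ENNReal.ofReal (w i j) * ENNReal.ofReal (d i j) := by
      rw [ENNReal.ofReal_sum_of_nonneg
        (fun i _ => Finset.sum_nonneg fun j _ => mul_nonneg (hw i j) (hd0 i j))]
      refine Finset.sum_congr rfl fun i _ => ?_
      rw [ENNReal.ofReal_sum_of_nonneg (fun j _ => mul_nonneg (hw i j) (hd0 i j))]
      exact Finset.sum_congr rfl fun j _ => ENNReal.ofReal_mul (hw i j)
    rw [hsum]
    simp only [π, lintegral_finsetSum_measure, lintegral_smul_measure, smul_eq_mul]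
    refine Finset.sum_le_sum fun i _ => Finset.sum_le_sum fun j _ => ?_
    have hae : ∀ᵐ p ∂((M i).prod (N j)), ENNReal.ofReal (e p.1 p.2) ≤ ENNReal.ofReal (d i j) := by
      have a1 : ∀ᵐ p ∂((M i).prod (N j)), r p.1 = i :=
        Measure.quasiMeasurePreserving_fst.ae (ae_cond_mem (hr i))
      have a2 : ∀ᵐ p ∂((M i).prod (N j)), r p.2 = j :=
        Measure.quasiMeasurePreserving_snd.ae (ae_cond_mem (hr j))
      filter_upwards [a1, a2] with p b1 b2
      have := hd p.1 p.2
      rw [b1, b2] at this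
      exact ENNReal.ofReal_le_ofReal this
    calc _ ≤ ENNReal.ofReal (w i j) * ∫⁻ p, ENNReal.ofReal (d i j) ∂((M i).prod (N j)) := by
          exact mul_le_mul' le_rfl (lintegral_mono_ae hae)
      _ = _ := by
          rw [lintegral_const, ← univ_prod_univ, Measure.prod_prod]
          calc _ = ENNReal.ofReal (w i j) * M i univ * N j univ * ENNReal.ofReal (d i j) := by ring
            _ = _ := by rw [hM, hN]

theorem testFun_le {S ι : Type*} [Finite ι] (e : S → S → ℝ) (pt : ι → S)
    (q : ι → ℚ) (x : S) (j : ι) : testFun e pt q x ≤ e x (pt j) + q j :=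
  ciInf_le (Set.finite_range _).bddBelow j

theorem testFun_lip {S ι : Type*} [Finite ι] [Nonempty ι] (e : S → S → ℝ)
    (hsymm : ∀ x y, e x y = e y x) (htri : ∀ x y z, e x z ≤ e x y + e y z)
    (pt : ι → S) (q : ι → ℚ) (x y : S) :
    |testFun e pt q x - testFun e pt q y| ≤ e x y := by
  have key : ∀ x y, testFun e pt q x - e x y ≤ testFun e pt q y := fun x y => by
    refine le_ciInf fun j => ?_
    have := testFun_le e pt q x j
    have := htri x y (pt j)
    linarith
  rw [abs_le]
  have a := key x y
  have b := key y x
  rw [hsymm y x] at b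
  constructor <;> linarith

theorem testFun_cont {S ι : Type*} [TopologicalSpace S] [Finite ι] [Nonempty ι] (e : S → S → ℝ)
    (hsymm : ∀ x y, e x y = e y x) (htri : ∀ x y z, e x z ≤ e x y + e y z)
    (hxx : ∀ x, e x x = 0)
    (hcont : Continuous fun p : S × S => e p.1 p.2)
    (pt : ι → S) (q : ι → ℚ) : Continuous (testFun e pt q) := by
  rw [continuous_iff_continuousAt]
  intro x
  refine tendsto_iff_dist_tendsto_zero.2 ?_
  refine squeeze_zero (fun _ => dist_nonneg)
    (fun y => (testFun_lip e hsymm htri pt q y x : dist _ _ ≤ e y x)) ?_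
  have : Continuous fun y => e y x := hcont.comp (by fun_prop : Continuous fun y => (y, x))
  simpa [hxx] using this.tendsto x

theorem testFun_bdd {S ι : Type*} [Finite ι] [Nonempty ι] (e : S → S → ℝ)
    (hsymm : ∀ x y, e x y = e y x) (htri : ∀ x y z, e x z ≤ e x y + e y z)
    (B : ℝ) (hB : ∀ x y, e x y ≤ B)
    (pt : ι → S) (q : ι → ℚ) : ∃ M, ∀ x, |testFun e pt q x| ≤ M := by
  obtain ⟨i⟩ := ‹Nonempty ι›
  have : Nonempty ι := ⟨i⟩
  refine ⟨B + |testFun e pt q (pt i)|, fun x => ?_⟩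
  have h1 := testFun_lip e hsymm htri pt q x (pt i)
  have h2 := hB x (pt i)
  have h3 := abs_sub_abs_le_abs_sub (testFun e pt q x) (testFun e pt q (pt i))
  linarith

theorem integral_cells {S ι : Type*} [MeasurableSpace S] [Fintype ι]
    (m : Measure S) [IsProbabilityMeasure m] 
    (r : S → ι) (hr : ∀ i, MeasurableSet (r ⁻¹' {i})) (g : ι → ℝ) :
    Integrable (fun x => g (r x)) m ∧ ∫ x, g (r x) ∂m = ∑ i, g i * m.real (r ⁻¹' {i}) := by
  classical
  have : (fun x => g (r x)) = fun x => ∑ i, (r ⁻¹' {i}).indicator (fun _ => g i) x := by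
    ext x
    simp [Set.indicator_apply]
  have hi : ∀ i, Integrable ((r ⁻¹' {i}).indicator (fun _ => g i)) m := fun i =>
    (integrable_const _).indicator (hr i)
  rw [this]
  refine ⟨integrable_finsetSum _ fun i _ => hi i, ?_⟩
  rw [integral_finsetSum _ fun i _ => hi i]
  refine Finset.sum_congr rfl fun i _ => ?_
  rw [integral_indicator (hr i)]
  simp [mul_comm]

theorem discrete_coupling {S ι : Type*} [TopologicalSpace S] [MeasurableSpace S] [BorelSpace S]
    [Fintype ι] [Nonempty ι] (e : S → S → ℝ)
    (hsymm : ∀ x y, e x y = e y x) (htri : ∀ x y z, e x z ≤ e x y + e y z)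
    (hxx : ∀ x, e x x = 0) (h0 : ∀ x y, 0 ≤ e x y)
    (hcont : Continuous fun p : S × S => e p.1 p.2)
    (B : ℝ) (hB : ∀ x y, e x y ≤ B)
    (pt : ι → S) (r : S → ι) (hr : ∀ i, MeasurableSet (r ⁻¹' {i})) (ε : ℝ) (hε : 0 < ε)
    (hpt : ∀ x, e x (pt (r x)) ≤ ε)
    (m n : Measure S) [IsProbabilityMeasure m] [IsProbabilityMeasure n] (V : ℝ)
    (hV : ∀ q : ι → ℚ, ∫ x, testFun e pt q x ∂m - ∫ x, testFun e pt q x ∂n ≤ V) :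
    ∃ π ∈ Couplings m n, ∫⁻ p, ENNReal.ofReal (e p.1 p.2) ∂π ≤ ENNReal.ofReal (V + 6 * ε) := by
  by_contra hcon
  push Not at hcon
  have hsum : ∀ (m : Measure S) [IsProbabilityMeasure m], ∑ i, m.real (r ⁻¹' {i}) = 1 := by
    intro m _
    have := (integral_cells m r hr (fun _ => 1)).2
    simpa using this.symm
  have hT : ∀ w : ι → ι → ℝ, (∀ i j, 0 ≤ w i j) → (∀ i, ∑ j, w i j = m.real (r ⁻¹' {i})) →
      (∀ j, ∑ i, w i j = n.real (r ⁻¹' {j})) →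
      V + 4 * ε < ∑ i, ∑ j, w i j * e (pt i) (pt j) := by
    intro w hw h1 h2
    by_contra hlt
    push Not at hlt
    obtain ⟨π, hπ, hle⟩ := glue_coupling m n r hr w hw h1 h2 e
      (fun i j => e (pt i) (pt j) + 2 * ε) (fun x y => by
        have a1 := htri x (pt (r x)) y
        have a2 := htri (pt (r x)) (pt (r y)) y
        have a3 := hpt x
        have a4 := hpt y
        rw [hsymm] at a4
        linarith) (fun i j => by have := h0 (pt i) (pt j); linarith)
    have := (hcon π hπ).trans_le hle
    replace this := (ENNReal.ofReal_lt_ofReal_iff'.1 this).1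
    simp only [mul_add, Finset.sum_add_distrib, ← Finset.sum_mul, h1, hsum] at this
    linarith
  obtain ⟨φ, ψ, hφψ, hle⟩ := finite_dual (fun i j => e (pt i) (pt j)) _ _
    (fun i => measureReal_nonneg) (fun i => measureReal_nonneg) (hsum m) (hsum n) _ hT
  have hq : ∀ j, ∃ q : ℚ, -ψ j < q ∧ (q : ℝ) < -ψ j + ε := fun j => 
    exists_rat_btwn (by linarith)
  choose q hq1 hq2 using hq
  have hVq := hV q
  set u := testFun e pt q with hu
  obtain ⟨Mb, hMb⟩ := testFun_bdd e hsymm htri B hB pt q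
  have hint : ∀ (m : Measure S) [IsProbabilityMeasure m], Integrable u m := fun m _ =>
    Integrable.of_bound (testFun_cont e hsymm htri hxx hcont pt q).measurable.aestronglyMeasurable
      Mb (Filter.Eventually.of_forall hMb)
  have hux : ∀ x, |u x - u (pt (r x))| ≤ ε := fun x =>
    (testFun_lip e hsymm htri pt q x _).trans (hpt x)
  have hm : ∑ i, φ i * m.real (r ⁻¹' {i}) - ε ≤ ∫ x, u x ∂m := by
    obtain ⟨i1, i2⟩ := integral_cells m r hr φ
    rw [← i2]
    have : ∫ x, (φ (r x) - ε) ∂m ≤ ∫ x, u x ∂m := by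
      refine integral_mono (i1.sub (integrable_const _)) (hint m) fun x => ?_
      have : φ (r x) ≤ u (pt (r x)) := by
        refine le_ciInf fun j => ?_
        have := hφψ (r x) j
        have := hq1 j
        linarith
      have := abs_le.1 (hux x)
      simp only
      linarith
    rwa [integral_sub i1 (integrable_const _), integral_const, probReal_univ, one_smul] at this
  have hn : ∫ x, u x ∂n ≤ 2 * ε - ∑ i, ψ i * n.real (r ⁻¹' {i}) := by
    obtain ⟨i1, i2⟩ := integral_cells n r hr ψ
    rw [← i2]
    have : ∫ x, u x ∂n ≤ ∫ x, (2 * ε - ψ (r x)) ∂n := by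
      refine integral_mono (hint n) ((integrable_const _).sub i1) fun x => ?_
      have a1 := testFun_le e pt q (pt (r x)) (r x)
      have a2 := hq2 (r x)
      rw [hxx] at a1
      have := abs_le.1 (hux x)
      simp only
      linarith
    rwa [integral_sub (integrable_const _) i1, integral_const, probReal_univ, one_smul] at this
  linarith
theorem exists_countable_gen {S : Type*} [TopologicalSpace S] [PolishSpace S]
    (c : S → S → ℝ) (hc0 : ∀ x y, 0 ≤ c x y) (hstar : StarCond c) :
    ∃ u : ℕ → S → ℝ, (∀ n, u n ∈ LipC c) ∧ ∀ x y r, r < c x y → ∃ n, r < |u n x - u n y| := by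
  have h0 : (fun _ => 0 : S → ℝ) ∈ LipC c :=
    ⟨continuous_const, ⟨0, by simp⟩, fun x y => by simpa using hc0 x y⟩
  have hT : ∀ r : ℚ, ∃ T ⊆ LipC c, T.Countable ∧
      ⋃ u ∈ T, {p : S × S | (r : ℝ) < |u p.1 - u p.2|} =
        ⋃ u ∈ LipC c, {p : S × S | (r : ℝ) < |u p.1 - u p.2|} := by
    intro r
    obtain ⟨T, h1, h2, h3⟩ := TopologicalSpace.isOpen_biUnion_countable (LipC c)
      (fun u => {p : S × S | (r : ℝ) < |u p.1 - u p.2|}) (fun u hu => by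
        have := hu.1
        exact isOpen_lt continuous_const (by fun_prop))
    exact ⟨T, h1, h2, h3⟩
  choose T hT1 hT2 hT3 using hT
  let D : Set (S → ℝ) := insert (fun _ => 0) (⋃ r, T r)
  have hD : D.Countable := (countable_iUnion hT2).insert _
  obtain ⟨u, hu⟩ := hD.exists_eq_range ⟨_, mem_insert _ _⟩
  have hDL : D ⊆ LipC c := insert_subset h0 (iUnion_subset hT1)
  refine ⟨u, fun n => hDL (hu ▸ mem_range_self n), fun x y r hr => ?_⟩
  obtain ⟨s, hs1, hs2⟩ := exists_rat_btwn hr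
  rw [hstar x y] at hs2
  have hne : {r : ℝ | ∃ u ∈ LipC c, r = |u x - u y|}.Nonempty := ⟨_, _, h0, rfl⟩
  obtain ⟨_, ⟨v, hv, rfl⟩, hlt⟩ := exists_lt_of_lt_csSup hne hs2
  have : (x, y) ∈ ⋃ u ∈ T s, {p : S × S | (s : ℝ) < |u p.1 - u p.2|} := by
    rw [hT3]
    exact mem_biUnion hv hlt
  simp only [mem_iUnion] at this
  obtain ⟨w, hw, hlt'⟩ := this
  have : w ∈ D := Or.inr (mem_iUnion.2 ⟨s, hw⟩)
  rw [hu] at this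
  obtain ⟨n, rfl⟩ := this
  exact ⟨n, hs1.trans hlt'⟩

/-- Partial suprema of the generating pseudometrics. -/
def pe {S : Type*} (u : ℕ → S → ℝ) (N : ℕ) (x y : S) : ℝ :=
  partialSups (fun n => |u n x - u n y|) N

theorem pe_le {S : Type*} {u : ℕ → S → ℝ} {N : ℕ} {x y : S} {a : ℝ} :
    pe u N x y ≤ a ↔ ∀ n ≤ N, |u n x - u n y| ≤ a := partialSups_le_iff

theorem le_pe {S : Type*} (u : ℕ → S → ℝ) {n N : ℕ} (h : n ≤ N) (x y : S) :
    |u n x - u n y| ≤ pe u N x y :=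
  le_partialSups_of_le (fun n => |u n x - u n y|) h

theorem pe_nonneg {S : Type*} (u : ℕ → S → ℝ) (N : ℕ) (x y : S) : 0 ≤ pe u N x y :=
  (abs_nonneg _).trans (le_pe u (Nat.zero_le N) x y)

theorem pe_symm {S : Type*} (u : ℕ → S → ℝ) (N : ℕ) (x y : S) : pe u N x y = pe u N y x := by
  unfold pe; simp_rw [abs_sub_comm]

theorem pe_tri {S : Type*} (u : ℕ → S → ℝ) (N : ℕ) (x y z : S) :
    pe u N x z ≤ pe u N x y + pe u N y z :=
  pe_le.2 fun n hn => (abs_sub_le _ (u n y) _).trans (add_le_add (le_pe u hn x y) (le_pe u hn y z))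

theorem pe_self {S : Type*} (u : ℕ → S → ℝ) (N : ℕ) (x : S) : pe u N x x = 0 :=
  le_antisymm (pe_le.2 fun n _ => by simp) (pe_nonneg _ _ _ _)

theorem pe_mono {S : Type*} (u : ℕ → S → ℝ) {M N : ℕ} (h : M ≤ N) (x y : S) :
    pe u M x y ≤ pe u N x y := pe_le.2 fun _ hn => le_pe u (hn.trans h) x y

theorem pe_cont {S : Type*} [TopologicalSpace S] (u : ℕ → S → ℝ) (hu : ∀ n, Continuous (u n))
    (N : ℕ) : Continuous fun p : S × S => pe u N p.1 p.2 := by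
  induction N with
  | zero =>
    have := hu 0
    simp only [pe, partialSups_zero]
    fun_prop
  | succ N ih =>
    have := hu (N + 1)
    simp only [pe, partialSups_add_one] at ih ⊢
    exact ih.max (by fun_prop)

theorem pe_bdd {S : Type*} (u : ℕ → S → ℝ) (hu : ∀ n, ∃ M, ∀ x, |u n x| ≤ M) (N : ℕ) :
    ∃ B, ∀ x y, pe u N x y ≤ B := by
  choose M hM using hu
  refine ⟨partialSups (fun n => M n + M n) N, fun x y => pe_le.2 fun n hn => ?_⟩
  refine (abs_sub _ _).trans ((add_le_add (hM n x) (hM n y)).trans ?_)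
  exact le_partialSups_of_le (fun n => M n + M n) hn

theorem exists_cells {S : Type*} [TopologicalSpace S] [MeasurableSpace S] [BorelSpace S]
    [Nonempty S]
    (u : ℕ → S → ℝ) (hc : ∀ n, Continuous (u n)) (hu : ∀ n, ∃ M, ∀ x, |u n x| ≤ M) (N : ℕ)
    (ε : ℝ) (hε : 0 < ε) :
    ∃ (k : ℕ) (pt : Fin (k + 1) → S) (r : S → Fin (k + 1)), (∀ i, MeasurableSet (r ⁻¹' {i})) ∧
      ∀ x, pe u N x (pt (r x)) ≤ ε := by
  choose M hM using hu
  let R : S → (Fin (N + 1) → ℤ) := fun x n => ⌊u n x / ε⌋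
  have hR : Measurable R := measurable_pi_lambda _ fun n =>
    Int.measurable_floor.comp ((hc n).measurable.div_const ε)
  have hfin : (range R).Finite := by
    refine (Set.finite_Icc (fun n : Fin (N + 1) => ⌊- M n / ε⌋)
      (fun n : Fin (N + 1) => ⌊M n / ε⌋)).subset ?_
    rintro _ ⟨x, rfl⟩
    constructor
    · intro n
      have := abs_le.1 (hM n x)
      exact Int.floor_le_floor (div_le_div_of_nonneg_right this.1 hε.le)
    · intro n
      have := abs_le.1 (hM n x)
      exact Int.floor_le_floor (div_le_div_of_nonneg_right this.2 hε.le)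
  have : Finite (range R) := hfin
  obtain ⟨n, ⟨eq⟩⟩ := Finite.exists_equiv_fin (range R)
  have hn : n ≠ 0 := by
    rintro rfl
    obtain ⟨x⟩ := ‹Nonempty S›
    exact (eq ⟨R x, mem_range_self x⟩).elim0
  obtain ⟨k, rfl⟩ := Nat.exists_eq_succ_of_ne_zero hn
  refine ⟨k, fun i => (eq.symm i).2.choose, fun x => eq ⟨R x, mem_range_self x⟩, fun i => ?_,
    fun x => ?_⟩
  · have : (fun x => eq ⟨R x, mem_range_self x⟩) ⁻¹' {i} = R ⁻¹' {(eq.symm i).1} := by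
      ext x
      simp only [mem_preimage, mem_singleton_iff, ← Equiv.eq_symm_apply, Subtype.ext_iff]
    rw [this]
    exact hR (measurableSet_singleton _)
  · set y := (eq.symm (eq ⟨R x, mem_range_self x⟩)).2.choose with hy
    have hRy : R y = R x := by
      have := (eq.symm (eq ⟨R x, mem_range_self x⟩)).2.choose_spec
      rw [← hy] at this
      rw [this]; simp
    refine pe_le.2 fun n hn => ?_
    have h1 := congrFun hRy ⟨n, Nat.lt_succ_of_le hn⟩
    have h2 := Int.abs_sub_lt_one_of_floor_eq_floor h1.symm
    rw [← sub_div, abs_div, abs_of_pos hε, div_lt_one hε] at h2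
    exact h2.le

theorem limit_coupling {S : Type*} [TopologicalSpace S] [PolishSpace S] [MeasurableSpace S]
    [BorelSpace S] (m n : Measure S) [IsProbabilityMeasure m] [IsProbabilityMeasure n]
    (e : ℕ → S → S → ℝ) (hcont : ∀ N, Continuous fun p : S × S => e N p.1 p.2)
    (h0 : ∀ N x y, 0 ≤ e N x y) (hbdd : ∀ N, ∃ B, ∀ x y, e N x y ≤ B)
    (hmono : ∀ M N, M ≤ N → ∀ x y, e M x y ≤ e N x y)
    (c : S → S → ℝ) (hc : ∀ x y, ENNReal.ofReal (c x y) ≤ ⨆ N, ENNReal.ofReal (e N x y))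
    (a : ℕ → ℝ≥0∞) (V : ℝ≥0∞) (ha : Filter.Tendsto a Filter.atTop (nhds V))
    (hπ : ∀ N, ∃ π ∈ Couplings m n, ∫⁻ p, ENNReal.ofReal (e N p.1 p.2) ∂π ≤ a N) :
    KR c m n ≤ V := by
  choose π hπc hπa using hπ
  let Pm : ℕ → ProbabilityMeasure (S × S) := fun N => ⟨π N, (hπc N).1⟩
  have htight : IsTightMeasureSet {((μ : ProbabilityMeasure (S × S)) : Measure (S × S)) |
      μ ∈ range Pm} := by
    refine IsTightMeasureSet.prodMk ?_ ?_
    · refine (isTightMeasureSet_singleton (μ := m)).subset ?_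
      rintro _ ⟨_, ⟨_, ⟨N, rfl⟩, rfl⟩, rfl⟩
      exact (hπc N).2.1
    · refine (isTightMeasureSet_singleton (μ := n)).subset ?_
      rintro _ ⟨_, ⟨_, ⟨N, rfl⟩, rfl⟩, rfl⟩
      exact (hπc N).2.2
  have hK := isCompact_closure_of_isTightMeasureSet htight
  obtain ⟨L, -, hL⟩ := hK.ultrafilter_le_nhds' ((Filter.hyperfilter ℕ).map Pm)
    (by
      rw [Ultrafilter.mem_map]
      exact Filter.univ_mem' fun N => subset_closure (mem_range_self N))
  have hL' : Filter.Tendsto Pm (Filter.hyperfilter ℕ) (nhds L) := hL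
  have hfst : (L : Measure (S × S)).map Prod.fst = m := by
    have h1 := ProbabilityMeasure.tendsto_map_of_tendsto_of_continuous Pm L hL' continuous_fst
    have h2 : (fun i => (Pm i).map (continuous_fst (X := S) (Y := S)).measurable.aemeasurable)
        = fun _ => (⟨m, inferInstance⟩ : ProbabilityMeasure S) := by
      ext1 i
      exact Subtype.ext (hπc i).2.1
    rw [h2] at h1
    have h3 := tendsto_nhds_unique tendsto_const_nhds h1
    exact (congrArg (fun z : ProbabilityMeasure S => (z : Measure S)) h3).symm
  have hsnd : (L : Measure (S × S)).map Prod.snd = n := by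
    have h1 := ProbabilityMeasure.tendsto_map_of_tendsto_of_continuous Pm L hL' continuous_snd
    have h2 : (fun i => (Pm i).map (continuous_snd (X := S) (Y := S)).measurable.aemeasurable)
        = fun _ => (⟨n, inferInstance⟩ : ProbabilityMeasure S) := by
      ext1 i
      exact Subtype.ext (hπc i).2.2
    rw [h2] at h1
    have h3 := tendsto_nhds_unique tendsto_const_nhds h1
    exact (congrArg (fun z : ProbabilityMeasure S => (z : Measure S)) h3).symm
  have hM : ∀ M, ∫⁻ p, ENNReal.ofReal (e M p.1 p.2) ∂(L : Measure (S × S)) ≤ V := by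
    intro M
    obtain ⟨B, hB⟩ := hbdd M
    let g : BoundedContinuousFunction (S × S) NNReal :=
      BoundedContinuousFunction.mkOfBound
        ⟨fun p => (e M p.1 p.2).toNNReal, continuous_real_toNNReal.comp (hcont M)⟩ B (fun p q => by
          have := h0 M p.1 p.2
          have := h0 M q.1 q.2
          have := hB p.1 p.2
          have := hB q.1 q.2
          rw [NNReal.dist_eq]
          simp only [ContinuousMap.coe_mk, Real.coe_toNNReal _ (h0 M _ _)]
          rw [abs_le]; constructor <;> linarith)
    have h1 := (ProbabilityMeasure.tendsto_iff_forall_lintegral_tendsto.1 hL') g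
    refine le_of_tendsto_of_tendsto h1 (ha.mono_left Nat.hyperfilter_le_atTop) ?_
    refine Filter.Eventually.filter_mono Nat.hyperfilter_le_atTop ?_
    filter_upwards [Filter.eventually_ge_atTop M] with N hN
    refine le_trans (lintegral_mono fun p => ?_) (hπa N)
    exact ENNReal.ofReal_le_ofReal (hmono M N hN p.1 p.2)
  calc KR c m n ≤ ∫⁻ p, ENNReal.ofReal (c p.1 p.2) ∂(L : Measure (S × S)) :=
        iInf₂_le (L : Measure (S × S)) ⟨inferInstance, hfst, hsnd⟩
    _ ≤ ∫⁻ p, ⨆ N, ENNReal.ofReal (e N p.1 p.2) ∂(L : Measure (S × S)) :=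
        lintegral_mono fun p => hc p.1 p.2
    _ = ⨆ N, ∫⁻ p, ENNReal.ofReal (e N p.1 p.2) ∂(L : Measure (S × S)) :=
        lintegral_iSup (fun N => (hcont N).measurable.ennreal_ofReal)
          (fun M N h p => ENNReal.ofReal_le_ofReal (hmono M N h p.1 p.2))
    _ ≤ V := iSup_le hM

theorem exists_norming {S : Type*} [TopologicalSpace S] [PolishSpace S] [MeasurableSpace S]
    [BorelSpace S] [Nonempty S] (c : S → S → ℝ) (hc0 : ∀ x y, 0 ≤ c x y) (hstar : StarCond c) :
    (Measurable fun p : S × S => ENNReal.ofReal (c p.1 p.2)) ∧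
    ∃ d : ℕ → S → ℝ, (∀ k, d k ∈ LipC c) ∧
      ∀ (m n : Measure S) [IsProbabilityMeasure m] [IsProbabilityMeasure n],
        KR c m n ≤ ⨆ k, ENNReal.ofReal (∫ x, d k x ∂m - ∫ x, d k x ∂n) := by
  obtain ⟨u, hu, hgen⟩ := exists_countable_gen c hc0 hstar
  have hcont := fun n => (hu n).1
  have hbdd := fun n => (hu n).2.1
  have hpec : ∀ N x y, pe u N x y ≤ c x y := fun N x y => pe_le.2 fun n _ => (hu n).2.2 x y
  have hsup : ∀ x y, ENNReal.ofReal (c x y) ≤ ⨆ N, ENNReal.ofReal (pe u N x y) := by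
    intro x y
    refine le_of_forall_lt fun b hb => ?_
    obtain ⟨n, hn⟩ := hgen x y b.toReal (by
      rwa [ENNReal.lt_ofReal_iff_toReal_lt (hb.ne_top)] at hb)
    rw [lt_iSup_iff]
    refine ⟨n, ?_⟩
    rw [ENNReal.lt_ofReal_iff_toReal_lt (hb.ne_top)]
    exact hn.trans_le (le_pe u le_rfl x y)
  refine ⟨?_, ?_⟩
  · have : (fun p : S × S => ENNReal.ofReal (c p.1 p.2)) =
        fun p => ⨆ N, ENNReal.ofReal (pe u N p.1 p.2) := by
      ext p
      exact le_antisymm (hsup _ _) (iSup_le fun N => ENNReal.ofReal_le_ofReal (hpec N _ _))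
    rw [this]
    exact Measurable.iSup fun N => (pe_cont u hcont N).measurable.ennreal_ofReal
  have hcell := fun N : ℕ => exists_cells u hcont hbdd N (1 / ((N : ℝ) + 1)) (by positivity)
  choose k pt r hr hpt using hcell
  let J := Σ N : ℕ, (Fin (k N + 1) → ℚ)
  have : Nonempty J := ⟨⟨0, fun _ => 0⟩⟩
  obtain ⟨en, hen⟩ := exists_surjective_nat J
  refine ⟨fun i => testFun (pe u (en i).1) (pt (en i).1) (en i).2, fun i => ?_, ?_⟩
  · obtain ⟨B, hB⟩ := pe_bdd u hbdd (en i).1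
    exact ⟨testFun_cont _ (pe_symm u _) (pe_tri u _) (pe_self u _) (pe_cont u hcont _) _ _,
      testFun_bdd _ (pe_symm u _) (pe_tri u _) B hB _ _,
      fun x y => (testFun_lip _ (pe_symm u _) (pe_tri u _) _ _ x y).trans (hpec _ x y)⟩
  intro m n _ _
  set V := ⨆ i, ENNReal.ofReal (∫ x, testFun (pe u (en i).1) (pt (en i).1) (en i).2 x ∂m -
    ∫ x, testFun (pe u (en i).1) (pt (en i).1) (en i).2 x ∂n) with hVdef
  by_cases hVtop : V = ⊤
  · rw [hVtop]; exact le_top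
  refine limit_coupling m n (pe u) (pe_cont u hcont) (pe_nonneg u) (pe_bdd u hbdd)
    (fun M N h => pe_mono u h) c hsup
    (fun N => ENNReal.ofReal (V.toReal + 6 * (1 / ((N : ℝ) + 1)))) V ?_ fun N => ?_
  · have h1 : Filter.Tendsto (fun N : ℕ => V.toReal + 6 * (1 / ((N : ℝ) + 1))) Filter.atTop
        (nhds (V.toReal + 6 * 0)) :=
      (tendsto_one_div_add_atTop_nhds_zero_nat.const_mul 6).const_add _
    have h2 := ENNReal.tendsto_ofReal h1
    rwa [mul_zero, add_zero, ENNReal.ofReal_toReal hVtop] at h2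
  · obtain ⟨B, hB⟩ := pe_bdd u hbdd N
    refine discrete_coupling (pe u N) (pe_symm u _) (pe_tri u _) (pe_self u _) (pe_nonneg u _)
      (pe_cont u hcont _) B hB (pt N) (r N) (hr N) _ (by positivity) (hpt N) m n V.toReal ?_
    intro q
    obtain ⟨i, hi⟩ := hen ⟨N, q⟩
    rw [← ENNReal.ofReal_le_iff_le_toReal hVtop]
    have := le_iSup (fun i => ENNReal.ofReal (∫ x, testFun (pe u (en i).1) (pt (en i).1) (en i).2 x ∂m -
      ∫ x, testFun (pe u (en i).1) (pt (en i).1) (en i).2 x ∂n)) i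
    rwa [hi] at this

theorem aemeas_of_univ {Ω : Type*} [mΩ : MeasurableSpace Ω] (P : Measure Ω)
    [IsProbabilityMeasure P] (f : Ω → ℝ≥0∞) (hf : @Measurable Ω ℝ≥0∞ (univCompletion mΩ) _ f) :
    AEMeasurable f P := by
  have hle : univCompletion mΩ ≤ muCompletion mΩ P := by
    have h : IsFiniteMeasure P := inferInstance
    exact iInf_le_of_le P (iInf_le _ h)
  have : NullMeasurable f P := fun s hs => hle _ (hf hs)
  exact this.aemeasurable

theorem lintegral_mix {Ω T : Type*} [MeasurableSpace Ω] [MeasurableSpace T] (P : Measure Ω)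
    [IsProbabilityMeasure P] (lamK : Ω → Measure T) (hprob : ∀ ω, IsProbabilityMeasure (lamK ω))
    (hae : ∀ B, MeasurableSet B → AEMeasurable (fun ω => lamK ω B) P)
    (ρ : Measure T) (hρ : ∀ B, MeasurableSet B → ρ B = ∫⁻ ω, lamK ω B ∂P)
    (g : T → ℝ≥0∞) (hg : Measurable g) :
    AEMeasurable (fun ω => ∫⁻ t, g t ∂(lamK ω)) P ∧
      ∫⁻ t, g t ∂ρ = ∫⁻ ω, ∫⁻ t, g t ∂(lamK ω) ∂P := by
  refine Measurable.ennreal_induction (motive := fun g =>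
    AEMeasurable (fun ω => ∫⁻ t, g t ∂(lamK ω)) P ∧
      ∫⁻ t, g t ∂ρ = ∫⁻ ω, ∫⁻ t, g t ∂(lamK ω) ∂P) ?_ ?_ ?_ hg
  · intro a s hs
    simp only [lintegral_indicator_const hs]
    exact ⟨(hae s hs).const_mul a, by rw [hρ s hs, lintegral_const_mul'' _ (hae s hs)]⟩
  · intro f g _ hf hg ihf ihg
    simp only [Pi.add_apply, lintegral_add_left hf]
    exact ⟨ihf.1.add ihg.1, by rw [lintegral_add_left' ihf.1, ihf.2, ihg.2]⟩
  · intro f hf hmono ih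
    simp only [lintegral_iSup hf hmono]
    refine ⟨AEMeasurable.iSup fun n => (ih n).1, ?_⟩
    rw [lintegral_iSup' (fun n => (ih n).1)]
    · exact iSup_congr fun n => (ih n).2
    · exact Filter.Eventually.of_forall fun ω m n hmn => lintegral_mono (hmono hmn)

theorem mix_apply {S : Type*} [MeasurableSpace S] {Ω : Type*} [MeasurableSpace Ω] (P : Measure Ω)
    [IsProbabilityMeasure P] (lamK : Ω → Measure (S × S))
    (hprob : ∀ ω, IsProbabilityMeasure (lamK ω))
    (hae : ∀ B, MeasurableSet B → AEMeasurable (fun ω => lamK ω B) P)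
    (ρ : Measure (S × S)) [IsProbabilityMeasure ρ]
    (hρ : ∀ B C, MeasurableSet B → MeasurableSet C → ρ (B ×ˢ C) = ∫⁻ ω, lamK ω (B ×ˢ C) ∂P) :
    ∀ B, MeasurableSet B → ρ B = ∫⁻ ω, lamK ω B ∂P := by
  refine MeasurableSpace.induction_on_inter generateFrom_prod.symm isPiSystem_prod ?_ ?_ ?_ ?_
  · simp
  · rintro _ ⟨B, hB, C, hC, rfl⟩
    exact hρ B C hB hC
  · intro t ht ih
    rw [measure_compl ht (measure_ne_top _ _), ih, measure_univ]
    have : ∀ ω, lamK ω tᶜ = 1 - lamK ω t := fun ω => by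
      rw [measure_compl ht (measure_ne_top _ _), measure_univ]
    simp_rw [this]
    rw [lintegral_sub' (hae t ht) (ih ▸ measure_ne_top _ _)
      (Filter.Eventually.of_forall fun ω => prob_le_one)]
    simp
  · intro f hd hf ih
    rw [measure_iUnion hd hf]
    simp_rw [measure_iUnion hd hf, ih]
    rw [lintegral_tsum fun i => hae _ (hf i)]

theorem weak_duality {S : Type*} [TopologicalSpace S] [MeasurableSpace S] 
    {Ω : Type*} [MeasurableSpace Ω] (P : Measure Ω)
    (c : S → S → ℝ) 
    (μ ν : Measure (Ω × S)) [IsProbabilityMeasure μ] [IsProbabilityMeasure ν]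
    (hμP : μ.map Prod.fst = P) (hνP : ν.map Prod.fst = P)
    (x₀ : S)
    (hμint : ∫⁻ p : Ω × S, ENNReal.ofReal (c p.2 x₀) ∂μ < ⊤)
    (hνint : ∫⁻ p : Ω × S, ENNReal.ofReal (c p.2 x₀) ∂ν < ⊤) :
    paramLipDist c μ ν ≤ paramKR c μ ν := by
  refine iSup₂_le fun f hf => le_iInf₂ fun π hπ => ?_
  obtain ⟨hfm, hfl⟩ := hf
  obtain ⟨hπp, hπ1, hπ2⟩ := hπ
  have hg : Measurable fun ω => f (ω, x₀) := hfm.comp (by fun_prop)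
  have key : ∀ (μ : Measure (Ω × S)), μ.map Prod.fst = P →
      ∫⁻ p : Ω × S, ENNReal.ofReal (c p.2 x₀) ∂μ < ⊤ →
      (Integrable f μ ↔ Integrable (fun ω => f (ω, x₀)) P) := by
    intro μ hμ hi
    have hh : Integrable (fun p : Ω × S => f p - f (p.1, x₀)) μ := by
      refine ⟨(hfm.sub (hg.comp measurable_fst)).aestronglyMeasurable, ?_⟩
      refine lt_of_le_of_lt (lintegral_mono fun p => ?_) hi
      rw [Real.enorm_eq_ofReal_abs]
      exact ENNReal.ofReal_le_ofReal ((hfl p.1).2.2 p.2 x₀)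
    rw [← hμ, integrable_map_measure hg.aestronglyMeasurable measurable_fst.aemeasurable]
    constructor
    · intro h
      have := h.sub hh
      refine this.congr (Filter.Eventually.of_forall fun p => ?_)
      simp
    · intro h
      have := hh.add h
      refine this.congr (Filter.Eventually.of_forall fun p => ?_)
      simp
  by_cases hfi : Integrable f μ
  swap
  · have hfi' : ¬ Integrable f ν := by
      rwa [key ν hνP hνint, ← key μ hμP hμint]
    simp [integral_undef hfi, integral_undef hfi']
  have hfi' : Integrable f ν := by
    rwa [key ν hνP hνint, ← key μ hμP hμint]
  have m1 : Measurable fun p : Ω × S × S => (p.1, p.2.1) := by fun_prop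
  have m2 : Measurable fun p : Ω × S × S => (p.1, p.2.2) := by fun_prop
  rw [← hπ1] at hfi
  rw [← hπ2] at hfi'
  have j1 : Integrable (fun p : Ω × S × S => f (p.1, p.2.1)) π := hfi.comp_measurable m1
  have j2 : Integrable (fun p : Ω × S × S => f (p.1, p.2.2)) π := hfi'.comp_measurable m2
  rw [← hπ1, ← hπ2, integral_map m1.aemeasurable hfm.aestronglyMeasurable,
    integral_map m2.aemeasurable hfm.aestronglyMeasurable,
    ← integral_sub j1 j2]
  calc _ ≤ ENNReal.ofReal ‖∫ p : Ω × S × S, (f (p.1, p.2.1) - f (p.1, p.2.2)) ∂π‖ :=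
        ENNReal.ofReal_le_ofReal (Real.le_norm_self _)
    _ = ‖∫ p : Ω × S × S, (f (p.1, p.2.1) - f (p.1, p.2.2)) ∂π‖ₑ := ofReal_norm _
    _ ≤ ∫⁻ p : Ω × S × S, ‖f (p.1, p.2.1) - f (p.1, p.2.2)‖ₑ ∂π := enorm_integral_le_lintegral_enorm _
    _ ≤ _ := lintegral_mono fun p => by
        rw [Real.enorm_eq_ofReal_abs]
        exact ENNReal.ofReal_le_ofReal ((hfl p.1).2.2 _ _)

theorem disint_compProd {Ω S : Type*} [MeasurableSpace Ω] [MeasurableSpace S]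
    (P : Measure Ω) [IsProbabilityMeasure P] (μ : Measure (Ω × S)) (κ : Ω → Measure S)
    (h : IsDisintegration P μ κ) :
    ∃ K : Kernel Ω S, IsMarkovKernel K ∧ (∀ ω, K ω = κ ω) ∧ μ = P ⊗ₘ K := by
  obtain ⟨h1, h2, h3⟩ := h
  let K : Kernel Ω S := ⟨κ, Measure.measurable_of_measurable_coe _ h2⟩
  have hK : IsMarkovKernel K := ⟨h1⟩
  refine ⟨K, hK, fun _ => rfl, ?_⟩
  ext A hA
  have := h3 (A.indicator 1) (measurable_one.indicator hA)
  rw [lintegral_indicator_one hA] at this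
  rw [this, ← lintegral_indicator_one hA, Measure.lintegral_compProd (measurable_one.indicator hA)]
  rfl

theorem exists_selection {Ω : Type*} [MeasurableSpace Ω] (F : ℕ → Ω → ℝ)
    (hF : ∀ k, Measurable (F k)) (hF0 : ∀ ω, F 0 ω = 0) (n : ℕ) :
    ∃ sel : Ω → ℕ, Measurable sel ∧ (∀ ω, sel ω ≤ n) ∧ ∀ ω, 0 ≤ F (sel ω) ω ∧
      partialSups (fun k => ENNReal.ofReal (F k ω)) n = ENNReal.ofReal (F (sel ω) ω) := by
  induction n with
  | zero =>
    refine ⟨fun _ => 0, measurable_const, fun _ => le_rfl, fun ω => ⟨(hF0 ω).ge, ?_⟩⟩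
    rw [partialSups_zero]
  | succ n ih =>
    obtain ⟨sel, h1, h2, h3⟩ := ih
    have hm : Measurable fun ω => F (sel ω) ω := by
      have : Measurable fun p : ℕ × Ω => F p.1 p.2 := measurable_from_prod_countable_right hF
      exact this.comp (h1.prodMk measurable_id)
    classical
    refine ⟨fun ω => if F (sel ω) ω < F (n + 1) ω then n + 1 else sel ω,
      Measurable.ite (measurableSet_lt hm (hF _)) measurable_const h1, fun ω => ?_, fun ω => ?_⟩
    · have := h2 ω
      dsimp only
      split_ifs <;> omega
    · obtain ⟨h4, h5⟩ := h3 ω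
      rw [partialSups_add_one, h5]
      dsimp only
      split_ifs with h
      · exact ⟨h4.trans h.le, max_eq_right (ENNReal.ofReal_le_ofReal h.le)⟩
      · exact ⟨h4, max_eq_left (ENNReal.ofReal_le_ofReal (not_lt.1 h))⟩

theorem strong_bound {S : Type*} [TopologicalSpace S] [MeasurableSpace S] [BorelSpace S]
    {Ω : Type*} [MeasurableSpace Ω] (P : Measure Ω) [IsProbabilityMeasure P]
    (c : S → S → ℝ) (hc0 : ∀ x y, 0 ≤ c x y)
    (μ ν : Measure (Ω × S)) [IsProbabilityMeasure μ] [IsProbabilityMeasure ν]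
    (κμ κν : Ω → Measure S)
    (hκμ : IsDisintegration P μ κμ) (hκν : IsDisintegration P ν κν)
    (d : ℕ → S → ℝ) (hd : ∀ k, d k ∈ LipC c) :
    ∫⁻ ω, ⨆ k, ENNReal.ofReal (∫ x, d k x ∂(κμ ω) - ∫ x, d k x ∂(κν ω)) ∂P
      ≤ paramLipDist c μ ν := by
  let d' : ℕ → S → ℝ := fun k => Nat.casesOn k (fun _ => 0) d
  have hd' : ∀ k, d' k ∈ LipC c := by
    rintro (_ | k)
    · exact ⟨continuous_const, ⟨0, by simp [d']⟩, fun x y => by simpa [d'] using hc0 x y⟩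
    · exact hd k
  obtain ⟨K, hK, hKκ, hμ⟩ := disint_compProd P μ κμ hκμ
  obtain ⟨K', hK', hKκ', hν⟩ := disint_compProd P ν κν hκν
  let F : ℕ → Ω → ℝ := fun k ω => ∫ x, d' k x ∂(K ω) - ∫ x, d' k x ∂(K' ω)
  have hF : ∀ k, Measurable (F k) := fun k =>
    ((hd' k).1.measurable.stronglyMeasurable.integral_kernel.measurable).sub
      ((hd' k).1.measurable.stronglyMeasurable.integral_kernel.measurable)
  have hF0 : ∀ ω, F 0 ω = 0 := fun ω => by simp [F, d']
  calc _ ≤ ∫⁻ ω, ⨆ k, ENNReal.ofReal (F k ω) ∂P := by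
        refine lintegral_mono fun ω => iSup_le fun k => ?_
        refine le_trans (le_of_eq ?_) (le_iSup _ (k + 1))
        simp only [F, d', hKκ, hKκ']
    _ = ∫⁻ ω, ⨆ n, partialSups (fun k => ENNReal.ofReal (F k ω)) n ∂P := by
        simp_rw [iSup_partialSups_eq]
    _ = ⨆ n, ∫⁻ ω, partialSups (fun k => ENNReal.ofReal (F k ω)) n ∂P := by
        refine lintegral_iSup (fun n => ?_) (fun m n h ω => partialSups_monotone _ h)
        obtain ⟨sel, h1, -, h3⟩ := exists_selection F hF hF0 n
        simp_rw [fun ω => (h3 ω).2]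
        have : Measurable fun p : ℕ × Ω => F p.1 p.2 := measurable_from_prod_countable_right hF
        exact (this.comp (h1.prodMk measurable_id)).ennreal_ofReal
    _ ≤ _ := by
        refine iSup_le fun n => ?_
        obtain ⟨sel, h1, h2, h3⟩ := exists_selection F hF hF0 n
        simp_rw [fun ω => (h3 ω).2]
        let f : Ω × S → ℝ := fun p => d' (sel p.1) p.2
        have hfm : Measurable f := by
          have : Measurable fun p : ℕ × S => d' p.1 p.2 :=
            measurable_from_prod_countable_right fun k => (hd' k).1.measurable
          exact this.comp ((h1.comp measurable_fst).prodMk measurable_snd)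
        have hfb : ∃ M, ∀ p, ‖f p‖ ≤ M := by
          choose M hM using fun k => (hd' k).2.1
          exact ⟨partialSups M n, fun p => (hM _ _).trans (le_partialSups_of_le M (h2 p.1))⟩
        obtain ⟨M, hM⟩ := hfb
        have hfi : ∀ (μ : Measure (Ω × S)) [IsProbabilityMeasure μ], Integrable f μ := fun μ _ =>
          Integrable.of_bound hfm.aestronglyMeasurable M (Filter.Eventually.of_forall hM)
        refine le_trans (le_of_eq ?_) (le_iSup₂ f ⟨hfm, fun ω => hd' (sel ω)⟩)
        have i1 := hfi (P ⊗ₘ K)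
        have i2 := hfi (P ⊗ₘ K')
        have hj : ∀ (K : Kernel Ω S) [IsMarkovKernel K],
            Integrable (fun ω => ∫ x, f (ω, x) ∂(K ω)) P := by
          intro K _
          have hG : ∀ k, Measurable fun ω => ∫ x, d' k x ∂(K ω) := fun k =>
            (hd' k).1.measurable.stronglyMeasurable.integral_kernel.measurable
          have hG' : Measurable fun p : ℕ × Ω => ∫ x, d' p.1 x ∂(K p.2) :=
            measurable_from_prod_countable_right hG
          refine Integrable.of_bound
            (hG'.comp (h1.prodMk measurable_id)).aestronglyMeasurable M
            (Filter.Eventually.of_forall fun ω => ?_)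
          have := norm_integral_le_of_norm_le_const (μ := K ω) (f := fun x => f (ω, x))
            (Filter.Eventually.of_forall fun x => hM (ω, x))
          simpa using this
        have j1 := hj K
        have j2 := hj K'
        rw [hμ, hν, Measure.integral_compProd i1, Measure.integral_compProd i2,
          ← integral_sub j1 j2]
        exact (ofReal_integral_eq_lintegral_ofReal (j1.sub j2)
            (Filter.Eventually.of_forall fun ω => (h3 ω).1)).symm

/-- **Point 2 of the parametrized Kantorovich–Rubinštein theorem**: given an
`𝒜*`-measurable selection `ω ↦ λ_ω` of optimal couplings of the disintegrations, the
measure `λ(A×B×C) = ∫_A λ_ω(B×C) dP` belongs to `D^par(μ,ν)`, attains the infimum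
defining `KR^par_c(μ,ν)`, and `KR^par_c(μ,ν) = ∫ c dλ = ℓ^par_c(μ,ν)`. -/
theorem parametrized_KR_duality
    {S : Type*} [TopologicalSpace S] [PolishSpace S] [MeasurableSpace S] [BorelSpace S]
    {Ω : Type*} [mΩ : MeasurableSpace Ω] (P : Measure Ω) [IsProbabilityMeasure P]
    (c : S → S → ℝ) (hc0 : ∀ x y, 0 ≤ c x y) (hstar : StarCond c)
    (μ ν : Measure (Ω × S)) [IsProbabilityMeasure μ] [IsProbabilityMeasure ν]
    (hμP : μ.map Prod.fst = P) (hνP : ν.map Prod.fst = P)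
    (x₀ : S)
    (hμint : ∫⁻ p : Ω × S, ENNReal.ofReal (c p.2 x₀) ∂μ < ⊤)
    (hνint : ∫⁻ p : Ω × S, ENNReal.ofReal (c p.2 x₀) ∂ν < ⊤)
    (κμ κν : Ω → Measure S)
    (hκμ : IsDisintegration P μ κμ) (hκν : IsDisintegration P ν κν)
    (lamK : Ω → Measure (S × S))
    (hlamK_prob : ∀ ω, IsProbabilityMeasure (lamK ω))
    (hlamK_meas : ∀ B : Set (S × S), MeasurableSet B →
      @Measurable Ω ℝ≥0∞ (univCompletion mΩ) _ (fun ω => lamK ω B))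
    (hlamK_marg : ∀ ω, lamK ω ∈ Couplings (κμ ω) (κν ω))
    (hlamK_opt : ∀ ω, ∫⁻ p, ENNReal.ofReal (c p.1 p.2) ∂(lamK ω) = KR c (κμ ω) (κν ω))
    (lam : Measure (Ω × S × S)) [IsProbabilityMeasure lam]
    (hlam : ∀ A : Set Ω, MeasurableSet A → ∀ B C : Set S, MeasurableSet B → MeasurableSet C →
      lam (A ×ˢ B ×ˢ C) = ∫⁻ ω in A, lamK ω (B ×ˢ C) ∂P) :
    paramKR c μ ν = ∫⁻ p : Ω × S × S, ENNReal.ofReal (c p.2.1 p.2.2) ∂lam ∧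
    paramKR c μ ν = paramLipDist c μ ν ∧
    lam ∈ ParamCouplings μ ν := by
  have hne : Nonempty S := ⟨x₀⟩
  obtain ⟨hcm, d, hd, hnorm⟩ := exists_norming c hc0 hstar
  have hae : ∀ B, MeasurableSet B → AEMeasurable (fun ω => lamK ω B) P := fun B hB =>
    aemeas_of_univ P _ (hlamK_meas B hB)
  have hmargμ : ∀ A : Set Ω, MeasurableSet A → ∀ B : Set S, MeasurableSet B →
      ∀ (μ : Measure (Ω × S)) (κ : Ω → Measure S), IsDisintegration P μ κ →
      μ (A ×ˢ B) = ∫⁻ ω in A, κ ω B ∂P := by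
    intro A hA B hB μ κ h
    obtain ⟨K, hK, hKκ, rfl⟩ := disint_compProd P μ κ h
    rw [Measure.compProd_apply_prod hA hB]
    simp_rw [hKκ]
  have hmem : lam ∈ ParamCouplings μ ν := by
    have m1 : Measurable fun p : Ω × S × S => (p.1, p.2.1) := by fun_prop
    have m2 : Measurable fun p : Ω × S × S => (p.1, p.2.2) := by fun_prop
    refine ⟨inferInstance, ?_, ?_⟩
    · have := Measure.isProbabilityMeasure_map (μ := lam) m1.aemeasurable
      refine Measure.ext_prod fun {A B} hA hB => ?_
      rw [Measure.map_apply m1 (hA.prod hB), hmargμ A hA B hB μ κμ hκμ]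
      have e1 : (fun p : Ω × S × S => (p.1, p.2.1)) ⁻¹' (A ×ˢ B) = A ×ˢ B ×ˢ univ := by
        ext p; simp
      rw [e1, hlam A hA B univ hB MeasurableSet.univ]
      refine lintegral_congr fun ω => ?_
      rw [← (hlamK_marg ω).2.1, Measure.map_apply measurable_fst hB, prod_univ]
    · have := Measure.isProbabilityMeasure_map (μ := lam) m2.aemeasurable
      refine Measure.ext_prod fun {A B} hA hB => ?_
      rw [Measure.map_apply m2 (hA.prod hB), hmargμ A hA B hB ν κν hκν]
      have e1 : (fun p : Ω × S × S => (p.1, p.2.2)) ⁻¹' (A ×ˢ B) = A ×ˢ univ ×ˢ B := by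
        ext p; simp
      rw [e1, hlam A hA univ B MeasurableSet.univ hB]
      refine lintegral_congr fun ω => ?_
      rw [← (hlamK_marg ω).2.2, Measure.map_apply measurable_snd hB, univ_prod]
  have hle1 := weak_duality P c μ ν hμP hνP x₀ hμint hνint
  have hle2 : paramKR c μ ν ≤ ∫⁻ p : Ω × S × S, ENNReal.ofReal (c p.2.1 p.2.2) ∂lam :=
    iInf₂_le lam hmem
  have hle3 : ∫⁻ p : Ω × S × S, ENNReal.ofReal (c p.2.1 p.2.2) ∂lam ≤ paramLipDist c μ ν := by
    let ρ := lam.map Prod.snd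
    have hρp : IsProbabilityMeasure ρ := Measure.isProbabilityMeasure_map measurable_snd.aemeasurable
    have hρ := mix_apply P lamK hlamK_prob hae ρ fun B C hB hC => by
      have := hlam univ MeasurableSet.univ B C hB hC
      rw [Measure.restrict_univ] at this
      rw [← this, Measure.map_apply measurable_snd (hB.prod hC), univ_prod]
    have h1 := (lintegral_mix P lamK hlamK_prob hae ρ hρ _ hcm).2
    rw [lintegral_map hcm measurable_snd] at h1
    rw [h1]
    refine le_trans (lintegral_mono fun ω => ?_) (strong_bound P c hc0 μ ν κμ κν hκμ hκν d hd)
    have := hκμ.1 ω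
    have := hκν.1 ω
    rw [hlamK_opt ω]
    exact hnorm (κμ ω) (κν ω)
  exact ⟨le_antisymm hle2 (hle3.trans hle1), le_antisymm (hle2.trans hle3) hle1, hmem⟩

end
end
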